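/- Let S(X) denote the number of integers q ≤ X with q ≡ 1 (mod 4) for which the Erdős conjecture holds mod q. Then liminf_{X→∞} S(X)/(X/4) ≥ 0.78. -/

import Mathlib

open Filter Topology Finset

/-- `f : ℕ → ℤ` is Erdősian mod `q`: periodic with period `q`, takes values `±1`
off multiples of `q`, and `0` on multiples of `q`. -/
def IsErdosian (q : ℕ) (f : ℕ → ℤ) : Prop :=
  (∀ n : ℕ, 1 ≤ n → f (n + q) = f n) ∧
  (∀ n : ℕ, 1 ≤ n → ¬ q ∣ n → f n = 1 ∨ f n = -1) ∧
  (∀ n : ℕ, 1 ≤ n → q ∣ n → f n = 0)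

/-- The Erdős conjecture is false mod `q`: there is an Erdősian function mod `q`
whose partial sums `∑_{n=1}^N f(n)/n` tend to `0`. -/
def ErdosConjectureFalse (q : ℕ) : Prop :=
  ∃ f : ℕ → ℤ, IsErdosian q f ∧
    Tendsto (fun N : ℕ => ∑ n ∈ Finset.Icc 1 N, (f n : ℝ) / n) atTop (nhds 0)

/-- The Erdős conjecture holds (is true) mod `q`. -/
def ErdosConjectureHolds (q : ℕ) : Prop := ¬ ErdosConjectureFalse q


section
lemma bk_siegel (K : Type) [Field K] [NumberField K] :
    ∃ c : ℝ, 1 ≤ c ∧ ∀ (α β : Type) [Fintype α] [Fintype β]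
      (a : Matrix α β (NumberField.RingOfIntegers K)) (A : ℝ), a ≠ 0 → 1 ≤ A →
      (∀ k l, NumberField.house (a k l : K) ≤ A) → 0 < Fintype.card α →
      2 * Fintype.card α ≤ Fintype.card β →
      ∃ ξ : β → NumberField.RingOfIntegers K, ξ ≠ 0 ∧ a.mulVec ξ = 0 ∧
        ∀ l, NumberField.house (ξ l : K) ≤ c * (c * Fintype.card β * A) := by
  classical
  have h1 : ∃ c₁ : ℝ, ∀ (α β : Type) [Fintype α] [Fintype β]
      (a : Matrix α β (NumberField.RingOfIntegers K)) (A : ℝ), a ≠ 0 →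
      (∀ k l, NumberField.house (a k l : K) ≤ A) → 0 < Fintype.card α →
      Fintype.card α < Fintype.card β →
      ∃ ξ : β → NumberField.RingOfIntegers K, ξ ≠ 0 ∧ a.mulVec ξ = 0 ∧
        ∀ l, NumberField.house (ξ l : K) ≤ c₁ * (c₁ * (Fintype.card β : ℕ) * A) ^
          (((Fintype.card α : ℕ) : ℝ) / ((Fintype.card β : ℕ) - (Fintype.card α : ℕ))) :=
    ⟨_, fun α β _ _ a A ha hA h0 hlt =>
      NumberField.house.exists_ne_zero_int_vec_house_le K a ha h0 hlt rfl hA rfl⟩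
  obtain ⟨c₁, h1⟩ := h1
  refine ⟨max 1 |c₁|, le_max_left _ _, ?_⟩
  intro α β _ _ a A ha hA hh h0 h2
  obtain ⟨ξ, hξ, hm, hb⟩ := h1 α β a A ha hh h0 (by omega)
  refine ⟨ξ, hξ, hm, fun l => (hb l).trans ?_⟩
  have hp : (0:ℝ) < Fintype.card α := by exact_mod_cast h0
  have hq : (2:ℝ) * Fintype.card α ≤ Fintype.card β := by exact_mod_cast h2
  set e : ℝ := (((Fintype.card α : ℕ) : ℝ) / ((Fintype.card β : ℕ) - (Fintype.card α : ℕ))) with he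
  have he0 : 0 ≤ e := div_nonneg hp.le (by linarith)
  have he1 : e ≤ 1 := by
    rw [he, div_le_one (by linarith)]; linarith
  have hbase : (1:ℝ) ≤ max 1 |c₁| * Fintype.card β * A := by
    have h3 : (1:ℝ) ≤ Fintype.card β := by exact_mod_cast (by omega)
    have := one_le_mul_of_one_le_of_one_le (one_le_mul_of_one_le_of_one_le (le_max_left 1 |c₁|) h3) hA
    exact this
  have h5 : |(c₁ * (Fintype.card β : ℕ) * A) ^ e| ≤ max 1 |c₁| * Fintype.card β * A := by
    refine (Real.abs_rpow_le_abs_rpow _ _).trans ?_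
    calc |c₁ * (Fintype.card β : ℕ) * A| ^ e ≤ (max 1 |c₁| * Fintype.card β * A) ^ e := by
          apply Real.rpow_le_rpow (abs_nonneg _) _ he0
          rw [abs_mul, abs_mul, abs_of_nonneg (by linarith : (0:ℝ) ≤ A), Nat.abs_cast]
          gcongr
          exact le_max_right _ _
      _ ≤ (max 1 |c₁| * Fintype.card β * A) ^ (1:ℝ) := Real.rpow_le_rpow_of_exponent_le hbase he1
      _ = _ := Real.rpow_one _
  calc c₁ * (c₁ * (Fintype.card β : ℕ) * A) ^ e ≤ |c₁ * (c₁ * (Fintype.card β : ℕ) * A) ^ e| := le_abs_self _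
    _ = |c₁| * |(c₁ * (Fintype.card β : ℕ) * A) ^ e| := abs_mul _ _
    _ ≤ max 1 |c₁| * (max 1 |c₁| * Fintype.card β * A) := by
        gcongr
        exact le_max_right _ _

lemma bk_vander {R Λ : Type} [CommRing R] [IsDomain R] [Fintype Λ] (r p : Λ → R)
    (hr : Function.Injective r) (h : ∀ n : ℕ, ∑ l, p l * r l ^ n = 0) : p = 0 := by
  classical
  let e := Fintype.equivFin Λ
  have := Matrix.eq_zero_of_forall_pow_sum_mul_pow_eq_zero (f := r ∘ e.symm) (v := p ∘ e.symm)
    (hr.comp e.symm.injective) (by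
      intro i
      rw [← h i]
      exact e.symm.sum_comp (fun l => p l * r l ^ (i:ℕ)))
  funext l
  have h2 := congrFun this (e l)
  simpa using h2

lemma bk_div_one (c : ℂ) (s : ℕ) : ∀ g : ℂ → ℂ, Differentiable ℂ g →
    (s : ℕ∞) ≤ analyticOrderAt g c →
    ∃ h : ℂ → ℂ, Differentiable ℂ h ∧ g = (fun z => (z - c) ^ s) * h := by
  induction s with
  | zero => intro g hg _; exact ⟨g, hg, by ext; simp⟩
  | succ s ih =>
    intro g hg ho
    have h0 : g c = 0 := by
      by_contra hne
      have := (hg.analyticAt c).analyticOrderAt_eq_zero.mpr hne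
      rw [this] at ho
      simp at ho
    have hd : Differentiable ℂ (dslope g c) := by
      have := (Complex.differentiableOn_dslope (f := g) (s := Set.univ) (c := c) Filter.univ_mem).mpr hg.differentiableOn
      exact differentiableOn_univ.mp this
    have hgd : g = (fun z => (z - c)) * dslope g c := by
      funext z
      have := sub_smul_dslope g c z
      simp only [smul_eq_mul, h0, sub_zero] at this
      simp [this]
    have ho2 : (s : ℕ∞) ≤ analyticOrderAt (dslope g c) c := by
      rw [hgd, analyticOrderAt_mul (by fun_prop) (hd.analyticAt c)] at ho
      have h1 : analyticOrderAt (fun z : ℂ => z - c) c = 1 := by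
        have := (AnalyticAt.analyticOrderAt_eq_natCast (f := fun z : ℂ => z - c) (z₀ := c) (n := 1) (by fun_prop)).mpr
          ⟨fun _ => 1, by fun_prop, by simp, by simp⟩
        simpa using this
      rw [h1] at ho
      push_cast at ho
      rw [add_comm] at ho
      exact (ENat.add_le_add_iff_left (by simp)).mp ho
    obtain ⟨h, hh, he⟩ := ih _ hd ho2
    refine ⟨h, hh, ?_⟩
    rw [hgd, he]
    funext z
    simp [pow_succ]
    ring

lemma bk_div (s : ℕ) (P : Finset ℂ) : ∀ g : ℂ → ℂ, Differentiable ℂ g →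
    (∀ c ∈ P, (s : ℕ∞) ≤ analyticOrderAt g c) →
    ∃ h : ℂ → ℂ, Differentiable ℂ h ∧ ∀ z, g z = (∏ c ∈ P, (z - c) ^ s) * h z := by
  classical
  induction P using Finset.induction_on with
  | empty => intro g hg _; exact ⟨g, hg, by simp⟩
  | insert a P ha ih =>
    intro g hg ho
    obtain ⟨h, hh, he⟩ := bk_div_one a s g hg (ho a (by simp))
    have h2 : ∀ c ∈ P, (s : ℕ∞) ≤ analyticOrderAt h c := by
      intro c hc
      have h3 := ho c (by simp [hc])
      rw [he, analyticOrderAt_mul (by fun_prop) (hh.analyticAt c)] at h3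
      have h4 : analyticOrderAt (fun z : ℂ => (z - a) ^ s) c = 0 := by
        rw [AnalyticAt.analyticOrderAt_eq_zero (by fun_prop)]
        apply pow_ne_zero
        intro h5
        rw [sub_eq_zero] at h5
        exact ha (h5 ▸ hc)
      simpa [h4] using h3
    obtain ⟨k, hk, hke⟩ := ih h hh h2
    refine ⟨k, hk, fun z => ?_⟩
    rw [Finset.prod_insert ha, he]
    simp [hke z]
    ring

/-- Schwarz lemma with many zeros at `0, …, N-1`. -/
lemma bk_schwarz (g : ℂ → ℂ) (hg : Differentiable ℂ g) (N s : ℕ) (hN : 1 ≤ N)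
    (hz : ∀ x < N, ∀ k < s, iteratedDeriv k g (x : ℂ) = 0) (R B : ℝ) (hR : 2 * N ≤ R)
    (hB : ∀ z : ℂ, ‖z‖ = R → ‖g z‖ ≤ B) (x0 : ℕ) (hx0 : x0 < N) :
    ‖iteratedDeriv s g (x0 : ℂ)‖ ≤ (s.factorial : ℝ) * (B * (4 * N / R) ^ (N * s)) := by
  classical
  have hN' : (1:ℝ) ≤ N := by exact_mod_cast hN
  obtain ⟨h, hh, he⟩ := bk_div s ((Finset.range N).image (fun x : ℕ => (x : ℂ))) g hg (by
    intro c hc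
    obtain ⟨x, hx, rfl⟩ := Finset.mem_image.mp hc
    rw [natCast_le_analyticOrderAt_iff_iteratedDeriv_eq_zero (hg.analyticAt _)]
    exact hz x (Finset.mem_range.mp hx))
  have he' : ∀ z, g z = (∏ x ∈ Finset.range N, (z - (x:ℂ)) ^ s) * h z := by
    intro z
    rw [he z, Finset.prod_image (by intro a _ b _ hab; exact Nat.cast_injective hab)]
  have hRpos : 0 < R := by linarith
  have hhb : ∀ z ∈ Metric.closedBall (0:ℂ) R, ‖h z‖ ≤ B / (R / 2) ^ (N * s) := by
    intro z hz
    rw [← closure_ball _ hRpos.ne'] at hz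
    refine Complex.norm_le_of_forall_mem_frontier_norm_le Metric.isBounded_ball hh.diffContOnCl ?_ hz
    intro y hy
    rw [frontier_ball _ hRpos.ne', mem_sphere_zero_iff_norm] at hy
    have h1 := hB y hy
    rw [he' y, norm_mul, norm_prod] at h1
    rw [le_div_iff₀ (by positivity), mul_comm]
    refine le_trans ?_ h1
    gcongr
    rw [pow_mul, ← pow_mul, mul_comm N s, pow_mul]
    calc ((R/2) ^ s) ^ N = ∏ x ∈ Finset.range N, (R/2)^s := by simp
      _ ≤ _ := by
        apply Finset.prod_le_prod
        · intros; positivity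
        · intro i hi
          rw [norm_pow]
          gcongr
          have h2 : ‖y‖ - ‖(i:ℂ)‖ ≤ ‖y - i‖ := norm_sub_norm_le _ _
          rw [hy, Complex.norm_natCast] at h2
          have h3 : (i:ℝ) ≤ N := by exact_mod_cast (Finset.mem_range.mp hi).le
          linarith
  have hxN : (x0:ℝ) + 1 ≤ N := by exact_mod_cast hx0
  have := Complex.norm_iteratedDeriv_le_of_forall_mem_sphere_norm_le (c := (x0:ℂ)) (R := 1)
    (C := B * (4 * N / R) ^ (N * s)) s one_pos hg.diffContOnCl (by
      intro z hz
      rw [mem_sphere_iff_norm] at hz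
      have hzn : ‖z‖ ≤ N := by
        have : ‖z‖ ≤ ‖z - x0‖ + ‖(x0:ℂ)‖ := by
          simpa using norm_add_le (z - x0) (x0:ℂ)
        rw [hz, Complex.norm_natCast] at this
        linarith
      have h1 := hhb z (by rw [mem_closedBall_zero_iff]; linarith)
      rw [he' z, norm_mul, norm_prod]
      have h2 : ∏ x ∈ Finset.range N, ‖(z - (x:ℂ)) ^ s‖ ≤ (2 * N) ^ (N * s) := by
        rw [mul_comm N s, pow_mul]
        calc _ ≤ ∏ x ∈ Finset.range N, (2 * N : ℝ) ^ s := by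
              apply Finset.prod_le_prod
              · intros; positivity
              · intro i hi
                rw [norm_pow]
                gcongr
                have h2 : ‖z - i‖ ≤ ‖z‖ + ‖(i:ℂ)‖ := norm_sub_le _ _
                rw [Complex.norm_natCast] at h2
                have h3 : (i:ℝ) ≤ N := by exact_mod_cast (Finset.mem_range.mp hi).le
                linarith
          _ = _ := by simp
      calc _ ≤ (2 * N : ℝ) ^ (N * s) * (B / (R / 2) ^ (N * s)) := by gcongr
        _ = B * (4 * N / R) ^ (N * s) := by
          rw [show (4 * N / R : ℝ) = (2 * N) / (R/2) by field_simp; ring, div_pow (2 * (N:ℝ)) (R/2)]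
          rw [mul_div_assoc', mul_div_assoc', mul_comm B])
  simpa using this

lemma bk_iter {Λ : Type} [Fintype Λ] (a y : Λ → ℂ) (x0 : ℂ) (k : ℕ) :
    iteratedDeriv k (fun z => ∑ l, a l * Complex.exp ((z - x0) * y l)) =
      fun z => ∑ l, a l * y l ^ k * Complex.exp ((z - x0) * y l) := by
  induction k with
  | zero => simp
  | succ k ih =>
    rw [iteratedDeriv_succ, ih]
    funext z
    have : HasDerivAt (fun z => ∑ l, a l * y l ^ k * Complex.exp ((z - x0) * y l))
        (∑ l, a l * y l ^ k * (Complex.exp ((z - x0) * y l) * (1 * y l))) z := by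
      apply HasDerivAt.fun_sum
      intro l _
      exact ((((hasDerivAt_id z).sub_const x0).mul_const (y l)).cexp).const_mul _
    rw [this.deriv]
    apply Finset.sum_congr rfl
    intro l _
    ring
end

section
structure BkData (K : Type) [Field K] [NumberField K] (I S : Type) [Fintype I] [Fintype S] where
  φ : K →+* ℂ
  r : S → (I → ℕ) → NumberField.RingOfIntegers K
  Y : I → (I → ℕ) → ℂ
  b : I → S → ℂ
  c : S → I → ℂ
  W : ℕ → (I → ℕ) → (I → ℕ) → NumberField.RingOfIntegers K
  Δ : ℝ
  C : ℝ
  hΔ : 1 ≤ Δ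
  hC : 1 ≤ C
  hY : ∀ j l, Y j l = ∑ σ, b j σ * φ (r σ l)
  hr : ∀ σ l, φ (r σ l) = ∑ j, c σ j * Y j l
  hc : ∀ σ j, ‖c σ j‖ ≤ C
  hW : ∀ D N : ℕ, ∀ l x : I → ℕ, (∀ i, l i < D) → (∀ i, x i < N) →
    φ (W (D * N) l x) = (Δ : ℂ) ^ (D * N) * Complex.exp (∑ j, (x j : ℂ) * Y j l)
  hWb : ∀ D N : ℕ, ∀ l x : I → ℕ, (∀ i, l i < D) → (∀ i, x i < N) →
    NumberField.house (W (D * N) l x : K) ≤ Real.exp (C * (D * N))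
  hrb : ∀ D : ℕ, ∀ σ, ∀ l : I → ℕ, (∀ i, l i < D) → NumberField.house (r σ l : K) ≤ C * D
  hYb : ∀ D : ℕ, ∀ j, ∀ l : I → ℕ, (∀ i, l i < D) → ‖Y j l‖ ≤ C * D
  hinj : ∃ σ, Function.Injective (r σ)

namespace BkData

variable {K : Type} [Field K] [NumberField K] {I S : Type} [Fintype I] [Fintype S] [DecidableEq I]

/-- the exponential at a grid point -/
noncomputable def E (d : BkData K I S) (l x : I → ℕ) : ℂ := Complex.exp (∑ j, (x j : ℂ) * d.Y j l)

noncomputable def G (d : BkData K I S) {D : ℕ} (a : (I → Fin D) → ℂ) (w : Multiset I) (u : Multiset S)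
    (x : I → ℕ) : ℂ :=
  ∑ l : I → Fin D, a l * (w.map (fun j => d.Y j (fun i => (l i : ℕ)))).prod *
    (u.map (fun σ => d.φ (d.r σ (fun i => (l i : ℕ))))).prod * d.E (fun i => (l i : ℕ)) x

lemma L1 (d : BkData K I S) {D : ℕ} (a : (I → Fin D) → ℂ) (n N : ℕ)
    (h : ∀ u : Multiset S, Multiset.card u < n → ∀ x : I → ℕ, (∀ i, x i < N) → d.G a 0 u x = 0) :
    ∀ (w : Multiset I) (u : Multiset S), Multiset.card w + Multiset.card u < n →
      ∀ x : I → ℕ, (∀ i, x i < N) → d.G a w u x = 0 := by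
  intro w
  induction w using Multiset.induction_on with
  | empty => intro u hu x hx; exact h u (by simpa using hu) x hx
  | cons j w ih =>
    intro u hu x hx
    have : d.G a (j ::ₘ w) u x = ∑ σ, d.b j σ * d.G a w (σ ::ₘ u) x := by
      simp only [G, Multiset.map_cons, Multiset.prod_cons, d.hY j, Finset.mul_sum, Finset.sum_mul]
      rw [Finset.sum_comm]
      refine Finset.sum_congr rfl fun σ _ => Finset.sum_congr rfl fun l _ => ?_
      ring
    rw [this]
    apply Finset.sum_eq_zero
    intro σ _
    rw [ih (σ ::ₘ u) (by simp at hu ⊢; omega) x hx, mul_zero]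

lemma L2 (d : BkData K I S) {D : ℕ} (a : (I → Fin D) → ℂ) (n : ℕ) (x : I → ℕ) (B : ℝ)
    (h : ∀ w : Multiset I, Multiset.card w = n → ‖d.G a w 0 x‖ ≤ B) :
    ∀ (u : Multiset S) (w : Multiset I), Multiset.card w + Multiset.card u = n →
      ‖d.G a w u x‖ ≤ (Fintype.card I * d.C) ^ (Multiset.card u) * B := by
  intro u
  have hC := d.hC
  induction u using Multiset.induction_on with
  | empty => intro w hw; simpa using h w (by simpa using hw)
  | cons σ u ih =>
    intro w hw
    have : d.G a w (σ ::ₘ u) x = ∑ j, d.c σ j * d.G a (j ::ₘ w) u x := by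
      simp only [G, Multiset.map_cons, Multiset.prod_cons, d.hr σ, Finset.mul_sum, Finset.sum_mul]
      rw [Finset.sum_comm]
      refine Finset.sum_congr rfl fun σ _ => Finset.sum_congr rfl fun l _ => ?_
      ring
    rw [this]
    calc _ ≤ ∑ j, ‖d.c σ j * d.G a (j ::ₘ w) u x‖ := norm_sum_le _ _
      _ ≤ ∑ j : I, d.C * ((Fintype.card I * d.C) ^ (Multiset.card u) * B) := by
        apply Finset.sum_le_sum
        intro j _
        rw [norm_mul]
        exact mul_le_mul (d.hc σ j) (ih _ (by simp at hw ⊢; omega)) (norm_nonneg _) (by linarith)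
      _ = _ := by
        simp only [Finset.sum_const, Finset.card_univ, nsmul_eq_mul, Multiset.card_cons, pow_succ]
        ring

lemma norm_E_le (d : BkData K I S) (D N : ℕ) (l x : I → ℕ) (hl : ∀ i, l i < D) (hx : ∀ i, x i < N) :
    ‖d.E l x‖ ≤ Real.exp (Fintype.card I * (N * (d.C * D))) := by
  rw [E, Complex.norm_exp]
  apply Real.exp_le_exp.mpr
  refine (Complex.re_le_norm _).trans ((norm_sum_le _ _).trans ?_)
  calc _ ≤ ∑ j : I, (N * (d.C * D) : ℝ) := by
        apply Finset.sum_le_sum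
        intro j _
        rw [norm_mul, Complex.norm_natCast]
        have h1 : (x j : ℝ) ≤ N := by exact_mod_cast (hx j).le
        exact mul_le_mul h1 (d.hYb D j l hl) (norm_nonneg _) (by positivity)
    _ = _ := by simp

lemma L3 (d : BkData K I S) {D : ℕ} (hD : 1 ≤ D) (a : (I → Fin D) → ℂ) (n N : ℕ) (hN : 1 ≤ N)
    (hI : 0 < Fintype.card I)
    (h : ∀ u : Multiset S, Multiset.card u < n → ∀ x : I → ℕ, (∀ i, x i < N) → d.G a 0 u x = 0)
    (P : ℝ) (hP : ∀ l, ‖a l‖ ≤ P) (R : ℝ) (hR : 2 * N ≤ R)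
    (x : I → ℕ) (hx : ∀ i, x i < N) (w : Multiset I) (hw : Multiset.card w = n) :
    ∃ s : ℕ, s ≤ n ∧ n ≤ Fintype.card I * s ∧ ‖d.G a w 0 x‖ ≤ (s.factorial : ℝ) *
      (((D : ℝ) ^ (Fintype.card I) * (P * (d.C * D) ^ n * Real.exp (Fintype.card I * (N * (d.C * D))) *
        Real.exp ((R + N) * (d.C * D)))) * (4 * N / R) ^ (N * s)) := by
  have hC := d.hC
  have hCD : 1 ≤ d.C * D := one_le_mul_of_one_le_of_one_le hC (by exact_mod_cast hD)
  have hN' : (1:ℝ) ≤ N := by exact_mod_cast hN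
  have hR0 : 0 < R := by linarith
  have hP0 : 0 ≤ P := (norm_nonneg _).trans (hP (fun _ => ⟨0, hD⟩))
  obtain ⟨j0, hj0⟩ : ∃ j0, n ≤ Fintype.card I * Multiset.count j0 w := by
    by_contra hcon
    push Not at hcon
    have h1 : ∑ j : I, Multiset.count j w = n := by
      rw [← hw]; exact Multiset.sum_count_eq_card (by simp)
    have hne : (Finset.univ : Finset I).Nonempty := by
      rw [← Finset.card_pos, Finset.card_univ]; exact hI
    have h2 : ∑ j : I, Fintype.card I * Multiset.count j w < ∑ j : I, n :=
      Finset.sum_lt_sum_of_nonempty hne (fun j _ => hcon j)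
    rw [← Finset.mul_sum, h1] at h2
    simp at h2
  set s := Multiset.count j0 w with hs
  have hsn : s ≤ n := hw ▸ Multiset.count_le_card j0 w
  refine ⟨s, hsn, hj0, ?_⟩
  set rest := w.filter (fun j => ¬ j0 = j) with hrest
  have hwsplit : w = Multiset.replicate s j0 + rest := by
    rw [hs, ← Multiset.filter_eq, hrest]
    exact (Multiset.filter_add_not _ _).symm
  have hcr : Multiset.card rest = n - s := by
    have := congrArg Multiset.card hwsplit
    rw [hw, Multiset.card_add, Multiset.card_replicate] at this
    omega
  let lv : (I → Fin D) → I → ℕ := fun l i => (l i : ℕ)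
  have hlv : ∀ l i, lv l i < D := fun l i => (l i).2
  let a' : (I → Fin D) → ℂ := fun l => a l * (rest.map (fun j => d.Y j (lv l))).prod * d.E (lv l) x
  let y : (I → Fin D) → ℂ := fun l => d.Y j0 (lv l)
  let g : ℂ → ℂ := fun z => ∑ l, a' l * Complex.exp ((z - (x j0 : ℂ)) * y l)
  have hg : Differentiable ℂ g := by
    simp only [g]
    fun_prop
  have hval : ∀ k q : ℕ, iteratedDeriv k g (q:ℂ) =
      d.G a (Multiset.replicate k j0 + rest) 0 (Function.update x j0 q) := by
    intro k q
    simp only [g]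
    rw [bk_iter]
    simp only [G, Multiset.map_add, Multiset.prod_add, Multiset.map_replicate, Multiset.prod_replicate,
      Multiset.map_zero, Multiset.prod_zero]
    refine Finset.sum_congr rfl fun l _ => ?_
    have hE : d.E (lv l) (Function.update x j0 q) = d.E (lv l) x * Complex.exp ((q - (x j0:ℂ)) * y l) := by
      simp only [E]
      rw [← Complex.exp_add]
      congr 1
      rw [← Finset.add_sum_erase _ _ (Finset.mem_univ j0), ← Finset.add_sum_erase _ (fun j => (x j : ℂ) * d.Y j (lv l)) (Finset.mem_univ j0)]
      have : ∑ j ∈ Finset.univ.erase j0, ((Function.update x j0 q j : ℕ) : ℂ) * d.Y j (lv l) =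
          ∑ j ∈ Finset.univ.erase j0, (x j : ℂ) * d.Y j (lv l) := by
        refine Finset.sum_congr rfl fun j hj => ?_
        rw [Function.update_of_ne (Finset.ne_of_mem_erase hj)]
      rw [this]
      simp only [Function.update_self, y]
      ring
    change a' l * y l ^ k * _ = a l * (y l ^ k * (rest.map (fun j => d.Y j (lv l))).prod) * 1 *
      d.E (lv l) (Function.update x j0 q)
    rw [hE]
    simp only [a']
    ring
  have hupd : ∀ q < N, ∀ i, Function.update x j0 q i < N := by
    intro q hq i
    by_cases hi : i = j0
    · subst hi; simpa using hq
    · rw [Function.update_of_ne hi]; exact hx i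
  have hzero : ∀ q < N, ∀ k < s, iteratedDeriv k g (q : ℂ) = 0 := by
    intro q hq k hk
    rw [hval]
    apply L1 d a n N h _ _ _ _ (hupd q hq)
    simp [hcr]
    omega
  have hbound : ∀ z : ℂ, ‖z‖ = R → ‖g z‖ ≤ (D : ℝ) ^ (Fintype.card I) * (P * (d.C * D) ^ n *
      Real.exp (Fintype.card I * (N * (d.C * D))) * Real.exp ((R + N) * (d.C * D))) := by
    intro z hz
    refine (norm_sum_le _ _).trans ?_
    calc _ ≤ ∑ l : I → Fin D, (P * (d.C * D) ^ n *
      Real.exp (Fintype.card I * (N * (d.C * D))) * Real.exp ((R + N) * (d.C * D))) := by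
          apply Finset.sum_le_sum
          intro l _
          rw [norm_mul]
          simp only [a', norm_mul]
          have hYp : ∀ m : Multiset I, ‖(m.map (fun j => d.Y j (lv l))).prod‖ ≤ (d.C * D) ^ (Multiset.card m) := by
            intro m
            induction m using Multiset.induction_on with
            | empty => simp
            | cons j m ih =>
              simp only [Multiset.map_cons, Multiset.prod_cons, norm_mul, Multiset.card_cons, pow_succ']
              exact mul_le_mul (d.hYb D j _ (hlv l)) ih (norm_nonneg _) (by linarith)
          have h1 := hYp rest
          have h2 : (d.C * D) ^ (Multiset.card rest) ≤ (d.C * D) ^ n :=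
            pow_le_pow_right₀ hCD (by omega)
          have h3 : ‖Complex.exp ((z - (x j0 : ℂ)) * y l)‖ ≤ Real.exp ((R + N) * (d.C * D)) := by
            rw [Complex.norm_exp]
            apply Real.exp_le_exp.mpr
            refine (Complex.re_le_norm _).trans ?_
            rw [norm_mul]
            have h4 : ‖z - (x j0 : ℂ)‖ ≤ R + N := by
              refine (norm_sub_le _ _).trans ?_
              rw [hz, Complex.norm_natCast]
              have : (x j0 : ℝ) ≤ N := by exact_mod_cast (hx j0).le
              linarith
            exact mul_le_mul h4 (d.hYb D j0 _ (hlv l)) (norm_nonneg _) (by linarith)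
          have h5 := norm_E_le d D N (lv l) x (hlv l) hx
          have h6 := hP l
          have h7 := h1.trans h2
          gcongr
      _ = _ := by simp
  have hfin := bk_schwarz g hg N s hN hzero R _ hR hbound (x j0) (hx j0)
  rw [hval, Function.update_eq_self, ← hwsplit] at hfin
  exact hfin

end BkData
end

section
lemma bk_house_le {K : Type} [Field K] [NumberField K] (x : K) (B : ℝ) (h : ∀ ψ : K →+* ℂ, ‖ψ x‖ ≤ B) :
    NumberField.house x ≤ B := by
  obtain ⟨ψ⟩ : Nonempty (K →+* ℂ) := inferInstance
  have hB : 0 ≤ B := (norm_nonneg _).trans (h ψ)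
  rw [NumberField.house, pi_norm_le_iff_of_nonneg hB]
  intro ψ
  exact h ψ

lemma bk_liouville {K : Type} [Field K] [NumberField K] (x : NumberField.RingOfIntegers K) (hx : x ≠ 0)
    (φ : K →+* ℂ) :
    1 ≤ ‖φ (x : K)‖ * NumberField.house (x : K) ^ (Module.finrank ℚ K - 1) := by
  refine le_trans ?_ (NumberField.norm_norm_le_norm_mul_house_pow (x : K) φ)
  have h1 : Algebra.norm ℤ x ≠ 0 := Algebra.norm_ne_zero_iff.mpr hx
  have h2 : (1:ℤ) ≤ |Algebra.norm ℤ x| := Int.one_le_abs h1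
  have h3 := Algebra.coe_norm_int x
  rw [← h3]
  simp only [Int.norm_cast_rat]
  rw [Int.norm_eq_abs]
  exact_mod_cast h2

namespace BkData

variable {K : Type} [Field K] [NumberField K] {I S : Type} [Fintype I] [Fintype S] [DecidableEq I]

noncomputable def F (d : BkData K I S) {D : ℕ} (N : ℕ) (p : (I → Fin D) → NumberField.RingOfIntegers K)
    (u : Multiset S) (x : I → ℕ) : NumberField.RingOfIntegers K :=
  ∑ l : I → Fin D, p l * (u.map (fun σ => d.r σ (fun i => (l i : ℕ)))).prod *
    d.W (D * N) (fun i => (l i : ℕ)) x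

lemma φ_F (d : BkData K I S) {D : ℕ} (N : ℕ) (p : (I → Fin D) → NumberField.RingOfIntegers K)
    (u : Multiset S) (x : I → ℕ) (hx : ∀ i, x i < N) :
    d.φ (d.F N p u x : K) = (d.Δ : ℂ) ^ (D * N) * d.G (fun l => d.φ (p l : K)) 0 u x := by
  simp only [F, G, map_sum, map_mul, Finset.mul_sum, Multiset.map_zero, Multiset.prod_zero, mul_one]
  refine Finset.sum_congr rfl fun l _ => ?_
  rw [d.hW D N _ x (fun i => (l i).2) hx, map_multiset_prod, map_multiset_prod, Multiset.map_map, Multiset.map_map, E]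
  simp only [Function.comp_def]
  ring

lemma house_F (d : BkData K I S) {D : ℕ} (hD : 1 ≤ D) (N : ℕ) (p : (I → Fin D) → NumberField.RingOfIntegers K)
    (P : ℝ) (hP : ∀ l, NumberField.house (p l : K) ≤ P)
    (u : Multiset S) (x : I → ℕ) (hx : ∀ i, x i < N) :
    NumberField.house (d.F N p u x : K) ≤
      (D:ℝ) ^ (Fintype.card I) * (P * (d.C * D) ^ (Multiset.card u) * Real.exp (d.C * (D * N))) := by
  have hC := d.hC
  have hP0 : 0 ≤ P := (norm_nonneg _).trans (hP (fun _ => ⟨0, hD⟩))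
  apply bk_house_le
  intro ψ
  simp only [F, map_sum, map_mul]
  refine (norm_sum_le _ _).trans ?_
  calc _ ≤ ∑ l : I → Fin D, (P * (d.C * D) ^ (Multiset.card u) * Real.exp (d.C * (D * N))) := by
        apply Finset.sum_le_sum
        intro l _
        have h1 := (NumberField.norm_embedding_le_house _ ψ).trans (hP l)
        have h2 := (NumberField.norm_embedding_le_house _ ψ).trans
          (d.hWb D N (fun i => (l i : ℕ)) x (fun i => (l i).2) hx)
        have h3 : ‖ψ ((u.map (fun σ => d.r σ (fun i => (l i : ℕ)))).prod : NumberField.RingOfIntegers K)‖ ≤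
            (d.C * D) ^ (Multiset.card u) := by
          induction u using Multiset.induction_on with
          | empty => simp
          | cons σ u ih =>
            simp only [Multiset.map_cons, Multiset.prod_cons, map_mul, norm_mul, Multiset.card_cons, pow_succ']
            have h4 := (NumberField.norm_embedding_le_house _ ψ).trans
              (d.hrb D σ (fun i => (l i : ℕ)) (fun i => (l i).2))
            gcongr
        rw [norm_mul, norm_mul]
        gcongr
    _ = _ := by simp

lemma siegel_step (d : BkData K I S) (c : ℝ)
    (hc : ∀ (α β : Type) [Fintype α] [Fintype β]
      (a : Matrix α β (NumberField.RingOfIntegers K)) (A : ℝ), a ≠ 0 → 1 ≤ A →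
      (∀ k l, NumberField.house (a k l : K) ≤ A) → 0 < Fintype.card α →
      2 * Fintype.card α ≤ Fintype.card β →
      ∃ ξ : β → NumberField.RingOfIntegers K, ξ ≠ 0 ∧ a.mulVec ξ = 0 ∧
        ∀ l, NumberField.house (ξ l : K) ≤ c * (c * Fintype.card β * A))
    (D N T : ℕ) (hD : 1 ≤ D) (hN : 1 ≤ N) (hT : 1 ≤ T)
    (hcard : 2 * (T ^ Fintype.card S * N ^ Fintype.card I) ≤ D ^ Fintype.card I) :
    ∃ p : (I → Fin D) → NumberField.RingOfIntegers K, p ≠ 0 ∧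
      (∀ l, NumberField.house (p l : K) ≤ c * (c * (D:ℝ) ^ Fintype.card I *
        (((d.C * D) ^ T) ^ Fintype.card S * Real.exp (d.C * (D * N))))) ∧
      ∀ u : Multiset S, Multiset.card u < T → ∀ x : I → ℕ, (∀ i, x i < N) → d.F N p u x = 0 := by
  classical
  have hC := d.hC
  have hCD : 1 ≤ d.C * D := one_le_mul_of_one_le_of_one_le hC (by exact_mod_cast hD)
  let a : Matrix ((S → Fin T) × (I → Fin N)) (I → Fin D) (NumberField.RingOfIntegers K) :=
    fun k l => (∏ σ, d.r σ (fun i => (l i : ℕ)) ^ (k.1 σ : ℕ)) *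
      d.W (D * N) (fun i => (l i : ℕ)) (fun i => (k.2 i : ℕ))
  have ha : a ≠ 0 := by
    intro h0
    have h1 := congrFun (congrFun h0 (fun _ => ⟨0, hT⟩, fun _ => ⟨0, hN⟩)) (fun _ => ⟨0, hD⟩)
    simp only [a, pow_zero, Finset.prod_const_one, one_mul, Matrix.zero_apply] at h1
    have h2 := d.hW D N (fun _ => 0) (fun _ => 0) (fun _ => hD) (fun _ => hN)
    rw [h1] at h2
    simp only [map_zero] at h2
    have h3 : (d.Δ : ℂ) ≠ 0 := by
      have := d.hΔ
      exact_mod_cast (by linarith : d.Δ ≠ 0)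
    exact (mul_ne_zero (pow_ne_zero _ h3) (Complex.exp_ne_zero _)) h2.symm
  obtain ⟨p, hp, hmul, hb⟩ := hc _ _ a (((d.C * D) ^ T) ^ Fintype.card S * Real.exp (d.C * (D * N))) ha
    (one_le_mul_of_one_le_of_one_le (one_le_pow₀ (one_le_pow₀ hCD)) (Real.one_le_exp (by positivity)))
    (by
      intro k l
      apply bk_house_le
      intro ψ
      simp only [a, map_mul, map_prod, map_pow]
      rw [norm_mul, norm_prod]
      have h2 := (NumberField.norm_embedding_le_house _ ψ).trans
          (d.hWb D N (fun i => (l i : ℕ)) (fun i => (k.2 i : ℕ)) (fun i => (l i).2) (fun i => (k.2 i).2))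
      have h3 : ∏ σ, ‖ψ (d.r σ (fun i => (l i : ℕ)) : K) ^ (k.1 σ : ℕ)‖ ≤ ((d.C * D) ^ T) ^ Fintype.card S := by
        calc _ ≤ ∏ σ : S, (d.C * D) ^ T := by
              apply Finset.prod_le_prod
              · intros; positivity
              · intro σ _
                rw [norm_pow]
                have h4 := (NumberField.norm_embedding_le_house _ ψ).trans
                  (d.hrb D σ (fun i => (l i : ℕ)) (fun i => (l i).2))
                calc _ ≤ (d.C * D) ^ (k.1 σ : ℕ) := by gcongr
                  _ ≤ _ := pow_le_pow_right₀ hCD (k.1 σ).2.le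
          _ = _ := by simp
      gcongr)
    (by simp; exact ⟨pow_pos hT _, pow_pos hN _⟩)
    (by simpa using hcard)
  refine ⟨p, hp, fun l => ?_, ?_⟩
  · have := hb l
    simpa using this
  · intro u hu x hx
    have h1 := congrFun hmul (fun σ => ⟨Multiset.count σ u, (Multiset.count_le_card σ u).trans_lt hu⟩,
      fun i => ⟨x i, hx i⟩)
    simp only [Matrix.mulVec, dotProduct, a, Pi.zero_apply] at h1
    rw [F, ← h1]
    refine Finset.sum_congr rfl fun l _ => ?_
    have : (u.map (fun σ => d.r σ (fun i => (l i : ℕ)))).prod =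
        ∏ σ, d.r σ (fun i => (l i : ℕ)) ^ (Multiset.count σ u) := by
      rw [Finset.prod_multiset_map_count]
      apply Finset.prod_subset (Finset.subset_univ _)
      intro σ _ hσ
      rw [Multiset.mem_toFinset] at hσ
      rw [Multiset.count_eq_zero_of_notMem hσ, pow_zero]
    rw [this]
    ring

lemma exists_min (d : BkData K I S) {D : ℕ} (N T : ℕ) (hN : 1 ≤ N)
    (p : (I → Fin D) → NumberField.RingOfIntegers K) (hp : p ≠ 0)
    (h : ∀ u : Multiset S, Multiset.card u < T → ∀ x : I → ℕ, (∀ i, x i < N) → d.F N p u x = 0) :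
    ∃ n : ℕ, T ≤ n ∧ (∃ u : Multiset S, Multiset.card u = n ∧ ∃ x : I → ℕ, (∀ i, x i < N) ∧ d.F N p u x ≠ 0) ∧
      ∀ u : Multiset S, Multiset.card u < n → ∀ x : I → ℕ, (∀ i, x i < N) → d.F N p u x = 0 := by
  classical
  have hex : ∃ n, ∃ u : Multiset S, Multiset.card u = n ∧ ∃ x : I → ℕ, (∀ i, x i < N) ∧ d.F N p u x ≠ 0 := by
    by_contra hcon
    push Not at hcon
    obtain ⟨σ, hσ⟩ := d.hinj
    apply hp
    have h0 : (fun l => d.φ (p l : K)) = 0 := by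
      apply bk_vander (fun l : I → Fin D => d.φ (d.r σ (fun i => (l i : ℕ)) : K))
      · intro l l' hll
        have h1 := hσ (NumberField.RingOfIntegers.ext (d.φ.injective hll))
        funext i
        exact Fin.ext (congrFun h1 i)
      · intro n
        have h1 := hcon n (Multiset.replicate n σ) (by simp) (fun _ => 0) (fun _ => hN)
        have h2 := d.φ_F N p (Multiset.replicate n σ) (fun _ => 0) (fun _ => hN)
        rw [h1] at h2
        simp only [map_zero] at h2
        have h3 : (d.Δ : ℂ) ≠ 0 := by
          have := d.hΔ
          exact_mod_cast (by linarith : d.Δ ≠ 0)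
        have h4 := (mul_eq_zero.mp h2.symm).resolve_left (pow_ne_zero _ h3)
        simpa [G, E] using h4
    funext l
    have h1 := congrFun h0 l
    simp only [Pi.zero_apply, map_eq_zero] at h1
    exact NumberField.RingOfIntegers.ext (by simpa using h1)
  refine ⟨Nat.find hex, ?_, Nat.find_spec hex, ?_⟩
  · by_contra hlt
    push Not at hlt
    obtain ⟨u, hu, x, hx, hne⟩ := Nat.find_spec hex
    exact hne (h u (by omega) x hx)
  · intro u hu x hx
    by_contra hne
    exact Nat.find_min hex hu ⟨u, rfl, x, hx, hne⟩

end BkData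
end

section
namespace BkData

variable {K : Type} [Field K] [NumberField K] {I S : Type} [Fintype I] [Fintype S] [DecidableEq I]

set_option maxHeartbeats 2000000 in
theorem contra (d : BkData K I S) (hS : Fintype.card S < Fintype.card I) : False := by
  obtain ⟨c, hc1, hc⟩ := bk_siegel K
  have hC := d.hC
  have hΔ := d.hΔ
  set dI := Fintype.card I with hdI
  set m := Fintype.card S with hm
  set deg := Module.finrank ℚ K with hdeg
  obtain ⟨e, he⟩ : ∃ e, dI = e + 1 := ⟨dI - 1, by omega⟩
  have hdI0 : (0:ℝ) < dI := by rw [he]; positivity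
  have hdI1 : (1:ℝ) ≤ dI := by rw [he]; push_cast; linarith [(Nat.cast_nonneg e : (0:ℝ) ≤ e)]
  have hlC : 0 ≤ Real.log d.C := Real.log_nonneg hC
  have hlc : 0 ≤ Real.log c := Real.log_nonneg hc1
  have hlΔ : 0 ≤ Real.log d.Δ := Real.log_nonneg hΔ
  have hldC : 0 ≤ Real.log (dI * d.C) := Real.log_nonneg (by nlinarith)
  set k1 : ℝ := 2 * Real.log c + dI + m * (Real.log d.C + 1) + d.C with hk1
  set k2 : ℝ := dI + k1 + (Real.log d.C + 1) + d.C with hk2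
  set k3 : ℝ := Real.log d.Δ + Real.log (dI * d.C) + 1 + dI + k1 + (Real.log d.C + 1) + dI * d.C + d.C with hk3
  have hk1p : 0 ≤ k1 := by positivity
  have hk2p : 0 ≤ k2 := by positivity
  obtain ⟨N, hNbig⟩ := exists_nat_ge (max 1 ((k3 + deg * k2 + 1) * dI ^ 2))
  have hN1r : (1:ℝ) ≤ N := (le_max_left _ _).trans hNbig
  have hN1 : 1 ≤ N := by exact_mod_cast hN1r
  have hN2 : (k3 + deg * k2 + 1) * dI ^ 2 ≤ N := (le_max_right _ _).trans hNbig
  set Q : ℝ := 2 * d.C * N + N / dI * Real.log (4 * N) with hQ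
  obtain ⟨v, hv⟩ := exists_nat_ge (max (max (3:ℝ) (2 * (N:ℝ) ^ 2)) (max (4 * (N:ℝ)) (Real.exp (Q + 1))))
  have hv3 : (3:ℝ) ≤ v := ((le_max_left _ _).trans (le_max_left _ _)).trans hv
  have hvN : (2 * N ^ 2 : ℝ) ≤ v := ((le_max_right _ _).trans (le_max_left _ _)).trans hv
  have hv4 : (4 * N : ℝ) ≤ v := ((le_max_left _ _).trans (le_max_right _ _)).trans hv
  have hvQ : Real.exp (Q + 1) ≤ v := ((le_max_right _ _).trans (le_max_right _ _)).trans hv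
  have hv1 : 1 ≤ v := by exact_mod_cast (by linarith : (1:ℝ) ≤ v)
  obtain ⟨D, hDdef⟩ : ∃ D, D = 2 * N * v ^ e := ⟨_, rfl⟩
  obtain ⟨T, hTdef⟩ : ∃ T, T = v ^ (e + 1) := ⟨_, rfl⟩
  have hT1 : 1 ≤ T := by rw [hTdef]; exact Nat.one_le_pow _ _ hv1
  have hve1 : 1 ≤ v ^ e := Nat.one_le_pow _ _ hv1
  have hD1 : 1 ≤ D := by
    rw [hDdef]; exact Nat.mul_pos (by omega) hve1
  have hcard : 2 * (T ^ m * N ^ dI) ≤ D ^ dI := by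
    rw [hDdef, hTdef, mul_pow, mul_pow, ← pow_mul, ← pow_mul]
    have h1 : v ^ ((e + 1) * m) ≤ v ^ (e * dI) := by
      apply Nat.pow_le_pow_right hv1
      rw [he, mul_comm]
      exact Nat.mul_le_mul_right _ (by omega)
    have h2 : 2 ≤ 2 ^ dI := by
      rw [he]; calc 2 = 2 ^ 1 := by norm_num
        _ ≤ _ := Nat.pow_le_pow_right (by norm_num) (by omega)
    calc 2 * (v ^ ((e + 1) * m) * N ^ dI) ≤ 2 ^ dI * (v ^ (e * dI) * N ^ dI) := by gcongr
      _ = _ := by ring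
  obtain ⟨p, hp0, hpb, hpz⟩ := d.siegel_step c hc D N T hD1 hN1 hT1 hcard
  obtain ⟨n, hTn, ⟨u, hu, x, hx, hne⟩, hz⟩ := d.exists_min N T hN1 p hp0 hpz
  set P : ℝ := c * (c * (D:ℝ) ^ dI * (((d.C * D) ^ T) ^ m * Real.exp (d.C * (D * N)))) with hPdef
  -- basic size facts
  have hTr : (v:ℝ) ^ (e + 1) ≤ n := by
    have : v ^ (e + 1) ≤ n := hTdef ▸ hTn
    exact_mod_cast this
  have hver : (1:ℝ) ≤ (v:ℝ) ^ e := by exact_mod_cast hve1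
  have hvn : (v:ℝ) ≤ n := by
    refine le_trans ?_ hTr
    rw [pow_succ]; exact le_mul_of_one_le_left (by linarith) hver
  have hn3 : (3:ℝ) ≤ n := hv3.trans hvn
  have hn0 : (0:ℝ) < n := by linarith
  have hDr : (D:ℝ) = 2 * N * v ^ e := by rw [hDdef]; push_cast; ring
  have hD1r : (1:ℝ) ≤ D := by exact_mod_cast hD1
  have hDN : (D:ℝ) * N ≤ n := by
    refine le_trans ?_ hTr
    rw [hDr, pow_succ]
    calc 2 * (N:ℝ) * v ^ e * N = v ^ e * (2 * N ^ 2) := by ring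
      _ ≤ _ := by gcongr
  have hDn : (D:ℝ) ≤ n := le_trans (le_mul_of_one_le_right (by linarith) hN1r) hDN
  have hTn' : (T:ℝ) ≤ n := by exact_mod_cast hTn
  set Ln := Real.log n with hLn
  have hLn1 : 1 ≤ Ln := by
    rw [hLn, Real.le_log_iff_exp_le hn0]
    linarith [Real.exp_one_lt_d9]
  have hLnQ : Q + 1 ≤ Ln := by
    rw [hLn, Real.le_log_iff_exp_le hn0]
    linarith
  have hnLn : (n:ℝ) ≤ n * Ln := le_mul_of_one_le_right hn0.le hLn1
  have hLnn : Ln ≤ n * Ln := le_mul_of_one_le_left (by linarith) (by linarith)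
  have h1nLn : 1 ≤ n * Ln := by linarith
  have hDNL : (D:ℝ) * N ≤ n * Ln := hDN.trans hnLn
  -- logs of the sizes
  have hlD0 : 0 ≤ Real.log D := Real.log_nonneg hD1r
  have hlD : Real.log D ≤ Ln := Real.log_le_log (by linarith) hDn
  have hlCD : Real.log (d.C * D) ≤ Real.log d.C + Ln := by
    rw [Real.log_mul (by linarith) (by linarith)]; linarith
  have hlCD0 : 0 ≤ Real.log (d.C * D) := Real.log_nonneg (by nlinarith)
  have hCDpos : 0 < d.C * D := by positivity
  have hDexp : (D:ℝ) ^ dI ≤ Real.exp (dI * (n * Ln)) := by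
    rw [← Real.exp_log (by positivity : (0:ℝ) < (D:ℝ) ^ dI), Real.log_pow]
    apply Real.exp_le_exp.mpr
    gcongr
    linarith
  have hCDn : (d.C * D) ^ n ≤ Real.exp ((Real.log d.C + 1) * (n * Ln)) := by
    rw [← Real.exp_log (by positivity : (0:ℝ) < (d.C * D) ^ n), Real.log_pow]
    apply Real.exp_le_exp.mpr
    calc (n:ℝ) * Real.log (d.C * D) ≤ n * (Real.log d.C + Ln) := by gcongr
      _ = Real.log d.C * n + n * Ln := by ring
      _ ≤ Real.log d.C * (n * Ln) + n * Ln := by gcongr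
      _ = _ := by ring
  have hP : P ≤ Real.exp (k1 * (n * Ln)) := by
    have hPpos : 0 < P := by rw [hPdef]; positivity
    rw [← Real.exp_log hPpos]
    apply Real.exp_le_exp.mpr
    rw [hPdef, Real.log_mul (by positivity) (by positivity), Real.log_mul (by positivity) (by positivity),
      Real.log_mul (by positivity) (by positivity), Real.log_mul (by positivity) (by positivity),
      Real.log_pow, Real.log_pow, Real.log_pow, Real.log_exp]
    have e1 : Real.log c ≤ Real.log c * (n * Ln) := le_mul_of_one_le_right hlc h1nLn
    have e2 : (dI:ℝ) * Real.log D ≤ dI * (n * Ln) := by gcongr; linarith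
    have e3 : (T:ℝ) * Real.log (d.C * D) ≤ (Real.log d.C + 1) * (n * Ln) := by
      calc (T:ℝ) * Real.log (d.C * D) ≤ n * (Real.log d.C + Ln) := by gcongr
        _ = Real.log d.C * n + n * Ln := by ring
        _ ≤ Real.log d.C * (n * Ln) + n * Ln := by gcongr
        _ = _ := by ring
    have e4 : (m:ℝ) * ((T:ℝ) * Real.log (d.C * D)) ≤ m * ((Real.log d.C + 1) * (n * Ln)) := by gcongr
    have e5 : d.C * (D * N) ≤ d.C * (n * Ln) := by gcongr
    rw [hk1]
    linarith
  have hP0 : 0 ≤ P := by rw [hPdef]; positivity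
  have hCDNexp : Real.exp (d.C * (D * N)) ≤ Real.exp (d.C * (n * Ln)) := by
    apply Real.exp_le_exp.mpr; gcongr
  -- lower bound
  have hH : NumberField.house (d.F N p u x : K) ≤ Real.exp (k2 * (n * Ln)) := by
    refine (d.house_F hD1 N p P hpb u x hx).trans ?_
    rw [hu]
    calc _ ≤ Real.exp (dI * (n * Ln)) * (Real.exp (k1 * (n * Ln)) * Real.exp ((Real.log d.C + 1) * (n * Ln)) *
          Real.exp (d.C * (n * Ln))) := by gcongr
      _ = _ := by
        rw [← Real.exp_add, ← Real.exp_add, ← Real.exp_add, hk2]; congr 1; ring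
  have hlow : 1 ≤ ‖d.φ (d.F N p u x : K)‖ * Real.exp (deg * (k2 * (n * Ln))) := by
    refine (bk_liouville _ hne d.φ).trans ?_
    gcongr
    calc NumberField.house (d.F N p u x : K) ^ (deg - 1) ≤ Real.exp (k2 * (n * Ln)) ^ (deg - 1) :=
          pow_le_pow_left₀ (NumberField.house_nonneg _) hH _
      _ ≤ Real.exp (k2 * (n * Ln)) ^ deg :=
          pow_le_pow_right₀ (Real.one_le_exp (by positivity)) (Nat.sub_le _ _)
      _ = _ := by rw [← Real.exp_nat_mul]
  -- upper bound
  set R : ℝ := (n:ℝ) ^ ((1:ℝ) / dI) with hRdef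
  have hRpow : R ^ (e + 1) = n := by
    rw [hRdef, ← Real.rpow_natCast, ← Real.rpow_mul hn0.le, he]
    rw [one_div, inv_mul_cancel₀ (by positivity), Real.rpow_one]
  have hR0 : 0 < R := Real.rpow_pos_of_pos hn0 _
  have hvR : (v:ℝ) ≤ R := by
    by_contra hlt
    push Not at hlt
    have : R ^ (e + 1) < (v:ℝ) ^ (e + 1) := pow_lt_pow_left₀ hlt hR0.le (by omega)
    linarith
  have hlogR : Real.log R = Ln / dI := by
    rw [hRdef, Real.log_rpow hn0, ← hLn]; ring
  have hDR : (D:ℝ) * R ≤ 2 * N * n := by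
    rw [hDr]
    calc 2 * (N:ℝ) * v ^ e * R ≤ 2 * (N:ℝ) * R ^ e * R := by gcongr
      _ = 2 * N * n := by rw [← hRpow, pow_succ]; ring
  set a : (I → Fin D) → ℂ := fun l => d.φ (p l : K) with ha
  have hGz : ∀ u : Multiset S, Multiset.card u < n → ∀ x : I → ℕ, (∀ i, x i < N) → d.G a 0 u x = 0 := by
    intro u hu x hx
    have h1 := d.φ_F N p u x hx
    rw [hz u hu x hx] at h1
    simp only [map_zero] at h1
    have h3 : (d.Δ : ℂ) ≠ 0 := by exact_mod_cast (by linarith : d.Δ ≠ 0)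
    exact (mul_eq_zero.mp h1.symm).resolve_left (pow_ne_zero _ h3)
  set Z : ℝ := (1 + dI + k1 + (Real.log d.C + 1) + dI * d.C + d.C) * (n * Ln) + 2 * d.C * N * n
    - N * n / dI * (Ln / dI - Real.log (4 * N)) with hZ
  have h4N : (0:ℝ) < 4 * N := by linarith
  have hq1 : 4 * N / R ≤ 1 := by rw [div_le_one hR0]; linarith
  have hlogq : Real.log (4 * N / R) = Real.log (4 * N) - Ln / dI := by
    rw [Real.log_div h4N.ne' hR0.ne', hlogR]
  have hlogq0 : Real.log (4 * N / R) ≤ 0 := Real.log_nonpos (by positivity) hq1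
  have hY : ∀ w : Multiset I, Multiset.card w = n → ‖d.G a w 0 x‖ ≤ Real.exp Z := by
    intro w hw
    obtain ⟨s, hsn, hns, hb⟩ := d.L3 hD1 a n N hN1 (by omega) hGz P
      (fun l => (NumberField.norm_embedding_le_house _ d.φ).trans (hpb l)) R (by linarith) x hx w hw
    refine hb.trans ?_
    have f1 : (s.factorial : ℝ) ≤ Real.exp (1 * (n * Ln)) := by
      have h1 : s.factorial ≤ n ^ n := (Nat.factorial_le hsn).trans (Nat.factorial_le_pow n)
      have h2 : (s.factorial : ℝ) ≤ (n:ℝ) ^ n := by exact_mod_cast h1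
      refine h2.trans ?_
      rw [← Real.exp_log (by positivity : (0:ℝ) < (n:ℝ) ^ n), Real.log_pow, one_mul]
    have f2 : Real.exp (dI * (N * (d.C * D))) ≤ Real.exp (dI * d.C * (n * Ln)) := by
      apply Real.exp_le_exp.mpr
      calc (dI:ℝ) * (N * (d.C * D)) = dI * d.C * (D * N) := by ring
        _ ≤ _ := by gcongr
    have f3 : Real.exp ((R + N) * (d.C * D)) ≤ Real.exp (2 * d.C * N * n + d.C * (n * Ln)) := by
      apply Real.exp_le_exp.mpr
      calc (R + N) * (d.C * D) = d.C * (D * R) + d.C * (D * N) := by ring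
        _ ≤ d.C * (2 * N * n) + d.C * (n * Ln) := by gcongr
        _ = _ := by ring
    have f4 : (4 * N / R) ^ (N * s) ≤ Real.exp (- (N * n / dI * (Ln / dI - Real.log (4 * N)))) := by
      rw [← Real.exp_log (by positivity : (0:ℝ) < (4 * N / R) ^ (N * s)), Real.log_pow]
      apply Real.exp_le_exp.mpr
      rw [show -(N * n / dI * (Ln / dI - Real.log (4 * N))) = (N * (n / dI)) * Real.log (4 * N / R) by
        rw [hlogq]; ring]
      apply mul_le_mul_of_nonpos_right _ hlogq0
      push_cast
      gcongr
      rw [div_le_iff₀ hdI0, mul_comm]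
      exact_mod_cast hns
    calc _ ≤ Real.exp (1 * (n * Ln)) * ((Real.exp (dI * (n * Ln)) * (Real.exp (k1 * (n * Ln)) *
          Real.exp ((Real.log d.C + 1) * (n * Ln)) * Real.exp (dI * d.C * (n * Ln)) *
          Real.exp (2 * d.C * N * n + d.C * (n * Ln)))) *
          Real.exp (- (N * n / dI * (Ln / dI - Real.log (4 * N))))) := by gcongr
      _ = Real.exp Z := by
        simp only [← Real.exp_add]; congr 1; rw [hZ]; ring
  have hG := d.L2 a n x (Real.exp Z) hY u 0 (by simpa using hu)
  have hup : ‖d.φ (d.F N p u x : K)‖ ≤ Real.exp ((Real.log d.Δ + Real.log (dI * d.C)) * (n * Ln) + Z) := by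
    rw [d.φ_F N p u x hx, norm_mul, norm_pow, Complex.norm_real, Real.norm_of_nonneg (by linarith)]
    have g1 : d.Δ ^ (D * N) ≤ Real.exp (Real.log d.Δ * (n * Ln)) := by
      rw [← Real.exp_log (by positivity : (0:ℝ) < d.Δ ^ (D * N)), Real.log_pow]
      apply Real.exp_le_exp.mpr
      push_cast
      rw [mul_comm]
      gcongr
    have g2 : (dI * d.C) ^ (Multiset.card u) ≤ Real.exp (Real.log (dI * d.C) * (n * Ln)) := by
      rw [hu, ← Real.exp_log (by positivity : (0:ℝ) < (dI * d.C) ^ n), Real.log_pow]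
      apply Real.exp_le_exp.mpr
      rw [mul_comm]
      gcongr
    calc _ ≤ Real.exp (Real.log d.Δ * (n * Ln)) * (Real.exp (Real.log (dI * d.C) * (n * Ln)) * Real.exp Z) := by
          refine mul_le_mul g1 (hG.trans ?_) (norm_nonneg _) (Real.exp_pos _).le
          gcongr
      _ = _ := by rw [← Real.exp_add, ← Real.exp_add]; congr 1; ring
  have hfin : 1 ≤ Real.exp ((Real.log d.Δ + Real.log (dI * d.C)) * (n * Ln) + Z) * Real.exp (deg * (k2 * (n * Ln))) :=
    hlow.trans (by gcongr)
  rw [← Real.exp_add, Real.one_le_exp_iff] at hfin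
  -- contradiction
  have hkey : (k3 + deg * k2 + 1) * (n * Ln) ≤ N / dI ^ 2 * (n * Ln) := by
    apply mul_le_mul_of_nonneg_right _ (by positivity)
    rw [le_div_iff₀ (by positivity)]
    exact hN2
  have hQn : Q * n + n ≤ n * Ln := by
    calc Q * n + n = n * (Q + 1) := by ring
      _ ≤ _ := by gcongr
  have hZ2 : (Real.log d.Δ + Real.log (dI * d.C)) * (n * Ln) + Z + deg * (k2 * (n * Ln)) =
      (k3 + deg * k2) * (n * Ln) + Q * n - N / dI ^ 2 * (n * Ln) := by
    rw [hZ, hk3, hQ]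
    field_simp
    ring
  rw [hZ2] at hfin
  linarith

end BkData
end

section
section
variable {K : Type} [Field K] [NumberField K]

lemma bk_trace [IsGalois ℚ K] (φ : K →+* ℂ) (x : NumberField.RingOfIntegers K) :
    ((Algebra.trace ℤ (NumberField.RingOfIntegers K) x : ℤ) : ℂ) = ∑ σ : K ≃ₐ[ℚ] K, φ (σ (x : K)) := by
  rw [← map_sum, ← trace_eq_sum_automorphisms, ← Algebra.coe_trace_int]
  simp

lemma bk_trace_le [IsGalois ℚ K] (x : NumberField.RingOfIntegers K) :
    |((Algebra.trace ℤ (NumberField.RingOfIntegers K) x : ℤ) : ℝ)| ≤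
      Fintype.card (K ≃ₐ[ℚ] K) * NumberField.house (x : K) := by
  obtain ⟨φ⟩ : Nonempty (K →+* ℂ) := inferInstance
  have h := bk_trace φ x
  have h2 : ‖((Algebra.trace ℤ (NumberField.RingOfIntegers K) x : ℤ) : ℂ)‖ ≤
      Fintype.card (K ≃ₐ[ℚ] K) * NumberField.house (x : K) := by
    rw [h]
    refine (norm_sum_le _ _).trans ?_
    rw [← Finset.card_univ, ← nsmul_eq_mul]
    apply Finset.sum_le_card_nsmul
    intro σ _
    exact NumberField.norm_embedding_le_house (x : K) (φ.comp (σ : K →+* K))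
  rwa [Complex.norm_intCast] at h2

lemma bk_pow_int (δ : ℕ) (a : K) (B : ℝ) (hB : 1 ≤ B) (hδB : (δ : ℝ) ≤ B) (ha : a ≠ 0)
    (h1 : IsIntegral ℤ ((δ : K) * a)) (h2 : IsIntegral ℤ ((δ : K) * a⁻¹))
    (h3 : NumberField.house ((δ : K) * a) ≤ B) (h4 : NumberField.house ((δ : K) * a⁻¹) ≤ B)
    (m : ℕ) (t : ℤ) (ht : |t| ≤ m) :
    IsIntegral ℤ ((δ : K) ^ m * a ^ t) ∧ NumberField.house ((δ : K) ^ m * a ^ t) ≤ B ^ m := by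
  have key : ∀ (b : K), IsIntegral ℤ ((δ : K) * b) → NumberField.house ((δ : K) * b) ≤ B → ∀ n : ℕ, n ≤ m →
      IsIntegral ℤ ((δ : K) ^ m * b ^ n) ∧ NumberField.house ((δ : K) ^ m * b ^ n) ≤ B ^ m := by
    intro b hb1 hb2 n hn
    obtain ⟨k, rfl⟩ := Nat.exists_eq_add_of_le hn
    have e : (δ : K) ^ (n + k) * b ^ n = (δ : K) ^ k * ((δ : K) * b) ^ n := by rw [mul_pow]; ring
    rw [e]
    refine ⟨((isIntegral_natCast _).pow k).mul (hb1.pow n), ?_⟩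
    apply bk_house_le
    intro ψ
    rw [map_mul, map_pow, map_pow, norm_mul, norm_pow, norm_pow, map_natCast, Complex.norm_natCast,
      pow_add, mul_comm]
    have := (NumberField.norm_embedding_le_house ((δ : K) * b) ψ).trans hb2
    gcongr
  rcases Int.eq_nat_or_neg t with ⟨n, rfl | rfl⟩
  · simpa using key a h1 h3 n (by simpa using ht)
  · have := key a⁻¹ h2 h4 n (by simpa using ht)
    simpa using this

lemma bk_denom {ι : Type} [Fintype ι] (α : ι → K) : ∃ δ : ℕ, 1 ≤ δ ∧ ∀ i, IsIntegral ℤ ((δ : K) * α i) ∧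
    IsIntegral ℤ ((δ : K) * (α i)⁻¹) := by
  classical
  obtain ⟨y, hy, h⟩ := exists_integral_multiples ℤ ℚ (L := K)
    (Finset.univ.image α ∪ Finset.univ.image (fun i => (α i)⁻¹))
  have h' : ∀ x ∈ (Finset.univ.image α ∪ Finset.univ.image (fun i => (α i)⁻¹)), IsIntegral ℤ ((y.natAbs : K) * x) := by
    intro x hx
    have h0 := h x hx
    rw [zsmul_eq_mul] at h0
    rcases Int.natAbs_eq y with hh | hh
    · rw [hh] at h0; simpa using h0
    · rw [hh] at h0; simpa using h0
  refine ⟨y.natAbs, Int.natAbs_pos.mpr hy, fun i => ⟨h' _ ?_, h' _ ?_⟩⟩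
  · exact Finset.mem_union_left _ (Finset.mem_image_of_mem _ (Finset.mem_univ i))
  · exact Finset.mem_union_right _ (Finset.mem_image_of_mem (fun i => (α i)⁻¹) (Finset.mem_univ i))

end
end

section
section
variable {K : Type} [Field K] [NumberField K]

lemma bk_leftinv (φ : K →+* ℂ) (w : (K ≃ₐ[ℚ] K) → ℂ) :
    ∃ c : {σ : K ≃ₐ[ℚ] K // w σ ≠ 0} → Module.Free.ChooseBasisIndex ℤ (NumberField.RingOfIntegers K) → ℂ,
    ∀ v : {σ : K ≃ₐ[ℚ] K // w σ ≠ 0} → ℂ, ∀ σ, v σ = ∑ j, c σ j *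
      ∑ ρ : {σ : K ≃ₐ[ℚ] K // w σ ≠ 0}, φ (ρ.1 (NumberField.RingOfIntegers.basis K j : K)) * w ρ.1 * v ρ := by
  classical
  let ω := NumberField.RingOfIntegers.basis K
  let T := Matrix.mulVecLin (Matrix.of fun (j : Module.Free.ChooseBasisIndex ℤ (NumberField.RingOfIntegers K))
    (ρ : {σ : K ≃ₐ[ℚ] K // w σ ≠ 0}) => φ (ρ.1 (ω j : K)) * w ρ.1)
  have hT : ∀ v j, T v j = ∑ ρ : {σ : K ≃ₐ[ℚ] K // w σ ≠ 0}, φ (ρ.1 (ω j : K)) * w ρ.1 * v ρ := by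
    intro v j
    simp only [T, Matrix.mulVecLin_apply, Matrix.mulVec, dotProduct, Matrix.of_apply]
  have hinj : LinearMap.ker T = ⊥ := by
    rw [LinearMap.ker_eq_bot']
    intro v hv
    have h1 : ∀ j, ∑ ρ : {σ : K ≃ₐ[ℚ] K // w σ ≠ 0}, φ (ρ.1 (ω j : K)) * w ρ.1 * v ρ = 0 := by
      intro j; rw [← hT, hv]; rfl
    have h2 : ∀ x : K, ∑ ρ : {σ : K ≃ₐ[ℚ] K // w σ ≠ 0}, φ (ρ.1 x) * w ρ.1 * v ρ = 0 := by
      intro x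
      rw [← (NumberField.integralBasis K).sum_repr x]
      simp only [NumberField.integralBasis_apply, map_sum, Finset.sum_mul, Algebra.smul_def, map_mul]
      rw [Finset.sum_comm]
      apply Finset.sum_eq_zero
      intro j _
      have h3 := h1 j
      have : ∀ ρ : {σ : K ≃ₐ[ℚ] K // w σ ≠ 0}, φ (ρ.1 (algebraMap ℚ K ((NumberField.integralBasis K).repr x j))) =
          (((NumberField.integralBasis K).repr x j : ℚ) : ℂ) := by
        intro ρ; rw [AlgEquiv.commutes]; simp
      simp only [this, mul_assoc, ← Finset.mul_sum]
      simp only [mul_assoc] at h3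
      rw [h3, mul_zero]
    have hli := (linearIndependent_monoidHom K ℂ).comp
      (fun ρ : {σ : K ≃ₐ[ℚ] K // w σ ≠ 0} => ((φ.comp (ρ.1 : K →+* K) : K →+* ℂ) : K →* ℂ)) (by
        intro a b hab
        apply Subtype.ext
        ext x
        have := DFunLike.congr_fun hab x
        exact φ.injective this)
    rw [Fintype.linearIndependent_iff] at hli
    have h4 := hli (fun ρ => w ρ.1 * v ρ) (by
      funext x
      rw [Finset.sum_apply]
      simp only [Pi.smul_apply, Pi.zero_apply, Function.comp, smul_eq_mul]
      refine Eq.trans ?_ (h2 x)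
      apply Finset.sum_congr rfl
      intro ρ _
      simp
      ring)
    funext ρ
    exact (mul_eq_zero.mp (h4 ρ)).resolve_left ρ.2
  obtain ⟨g, hg⟩ := LinearMap.exists_leftInverse_of_injective T hinj
  refine ⟨fun σ j => g (fun i => if j = i then 1 else 0) σ, ?_⟩
  intro v σ
  have h5 : g (T v) = v := by
    have := LinearMap.congr_fun hg v
    simpa using this
  conv_lhs => rw [← h5, LinearMap.pi_apply_eq_sum_univ g (T v)]
  rw [Finset.sum_apply]
  apply Finset.sum_congr rfl
  intro j _
  rw [Pi.smul_apply, smul_eq_mul, hT, mul_comm]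

set_option maxHeartbeats 1000000 in
theorem baker_galois [IsGalois ℚ K] (φ : K →+* ℂ) {ι : Type} [Fintype ι]
    (β : ι → NumberField.RingOfIntegers K) (α : ι → K) (lam : ι → ℂ)
    (hexp : ∀ i, Complex.exp (lam i) = φ (α i)) (h0 : ∑ i, φ (β i : K) * lam i = 0)
    (σ : K ≃ₐ[ℚ] K) : ∑ i, φ (σ (β i : K)) * lam i = 0 := by
  classical
  by_contra hσ
  set w : (K ≃ₐ[ℚ] K) → ℂ := fun σ => ∑ i, φ (σ (β i : K)) * lam i with hw
  obtain ⟨c, hc⟩ := bk_leftinv φ w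
  obtain ⟨ω, hω⟩ : ∃ ω, ω = NumberField.RingOfIntegers.basis K := ⟨_, rfl⟩
  obtain ⟨η, hη⟩ : ∃ η : (Module.Free.ChooseBasisIndex ℤ (NumberField.RingOfIntegers K) → ℕ) → NumberField.RingOfIntegers K,
    ∀ l, η l = ∑ i, (l i : NumberField.RingOfIntegers K) * ω i := ⟨_, fun _ => rfl⟩
  obtain ⟨Tr, hTr⟩ : ∃ Tr : NumberField.RingOfIntegers K → ℤ,
    ∀ x, Tr x = Algebra.trace ℤ (NumberField.RingOfIntegers K) x := ⟨_, fun _ => rfl⟩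
  have hα0 : ∀ i, α i ≠ 0 := by
    intro i h
    have := hexp i
    rw [h, map_zero] at this
    exact Complex.exp_ne_zero _ this
  have hYG : ∀ z : NumberField.RingOfIntegers K, ∑ i, (Tr (z * β i) : ℂ) * lam i =
      ∑ ρ : {σ : K ≃ₐ[ℚ] K // w σ ≠ 0}, φ (ρ.1 (z : K)) * w ρ.1 := by
    intro z
    rw [← Finset.sum_subtype (Finset.univ.filter (fun ρ => w ρ ≠ 0)) (by simp) (fun ρ => φ (ρ (z : K)) * w ρ),
      Finset.sum_filter_of_ne (fun ρ _ h => right_ne_zero_of_mul h)]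
    simp only [hTr, bk_trace φ, hw, Finset.mul_sum, Finset.sum_mul]
    rw [Finset.sum_comm]
    apply Finset.sum_congr rfl
    intro ρ _
    apply Finset.sum_congr rfl
    intro i _
    simp [mul_assoc]
  -- sizes
  set A : ℝ := ∑ j, NumberField.house (ω j : K) with hA
  have hA0 : 0 ≤ A := Finset.sum_nonneg (fun _ _ => NumberField.house_nonneg _)
  have hηb : ∀ (D : ℕ) (l), (∀ i, l i < D) → NumberField.house (η l : K) ≤ A * D := by
    intro D l hl
    have : (η l : K) = ∑ i, (l i : K) * (ω i : K) := by simp [hη]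
    rw [this]
    refine (NumberField.house_sum_le_sum_house _ _).trans ?_
    rw [hA, Finset.sum_mul]
    apply Finset.sum_le_sum
    intro i _
    rw [NumberField.house_nat_mul, mul_comm]
    have : (l i : ℝ) ≤ D := by exact_mod_cast (hl i).le
    have := NumberField.house_nonneg (ω i : K)
    gcongr
  set g : ℝ := (Fintype.card (K ≃ₐ[ℚ] K) : ℝ) with hg
  have hg0 : 0 ≤ g := Nat.cast_nonneg _
  have hTrb : ∀ x y z : NumberField.RingOfIntegers K, |(Tr (x * y * z) : ℝ)| ≤
      g * (NumberField.house (x : K) * NumberField.house (y : K) * NumberField.house (z : K)) := by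
    intro x y z
    rw [hTr]
    refine (bk_trace_le _).trans (mul_le_mul_of_nonneg_left ?_ hg0)
    push_cast
    exact (NumberField.house_mul_le _ _).trans
      (mul_le_mul_of_nonneg_right (NumberField.house_mul_le _ _) (NumberField.house_nonneg _))
  set Bβ : ℝ := ∑ i, NumberField.house (β i : K) with hBβ
  have hβb : ∀ i, NumberField.house (β i : K) ≤ Bβ := fun i =>
    Finset.single_le_sum (f := fun i => NumberField.house (β i : K))
      (fun _ _ => NumberField.house_nonneg _) (Finset.mem_univ i)
  have hωb : ∀ i, NumberField.house (ω i : K) ≤ A := fun i =>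
    Finset.single_le_sum (f := fun i => NumberField.house (ω i : K))
      (fun _ _ => NumberField.house_nonneg _) (Finset.mem_univ i)
  have hBβ0 : 0 ≤ Bβ := Finset.sum_nonneg (fun _ _ => NumberField.house_nonneg _)
  obtain ⟨M, hM⟩ := exists_nat_ge (g * (A * A * Bβ))
  have hMt : ∀ (D N : ℕ) l x, (∀ i, l i < D) → (∀ i, x i < N) → ∀ i,
      |Tr (η l * η x * β i)| ≤ ((M * (D * N) : ℕ) : ℤ) := by
    intro D N l x hl hx i
    have h1 : |(Tr (η l * η x * β i) : ℝ)| ≤ M * (D * N) := by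
      refine (hTrb _ _ _).trans ?_
      calc _ ≤ g * ((A * D) * (A * N) * Bβ) := by
            have a1 := hηb D l hl
            have a2 := hηb N x hx
            have a3 := hβb i
            have b1 := NumberField.house_nonneg (η l : K)
            have b2 := NumberField.house_nonneg (η x : K)
            have b3 := NumberField.house_nonneg (β i : K)
            exact mul_le_mul_of_nonneg_left (mul_le_mul (mul_le_mul a1 a2 b2 (b1.trans a1)) a3 b3
              (mul_nonneg (b1.trans a1) (b2.trans a2))) hg0
        _ = g * (A * A * Bβ) * (D * N) := by ring
        _ ≤ _ := mul_le_mul_of_nonneg_right hM (by positivity)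
    have h2 : ((|Tr (η l * η x * β i)| : ℤ) : ℝ) ≤ ((M * (D * N) : ℕ) : ℤ) := by
      push_cast; exact h1
    exact_mod_cast h2
  obtain ⟨δ, hδ1, hδ⟩ := bk_denom α
  set B : ℝ := 1 + δ + ∑ i, NumberField.house ((δ : K) * α i) + ∑ i, NumberField.house ((δ : K) * (α i)⁻¹) with hB
  have hs1 : 0 ≤ ∑ i, NumberField.house ((δ : K) * α i) := Finset.sum_nonneg (fun _ _ => NumberField.house_nonneg _)
  have hs2 : 0 ≤ ∑ i, NumberField.house ((δ : K) * (α i)⁻¹) := Finset.sum_nonneg (fun _ _ => NumberField.house_nonneg _)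
  have hδ0 : (0:ℝ) ≤ δ := Nat.cast_nonneg _
  have hB1 : 1 ≤ B := by linarith
  have hBδ : (δ:ℝ) ≤ B := by linarith
  have hBa : ∀ i, NumberField.house ((δ : K) * α i) ≤ B := fun i =>
    (Finset.single_le_sum (f := fun i => NumberField.house ((δ : K) * α i))
      (fun _ _ => NumberField.house_nonneg _) (Finset.mem_univ i)).trans (by linarith)
  have hBb : ∀ i, NumberField.house ((δ : K) * (α i)⁻¹) ≤ B := fun i =>
    (Finset.single_le_sum (f := fun i => NumberField.house ((δ : K) * (α i)⁻¹))
      (fun _ _ => NumberField.house_nonneg _) (Finset.mem_univ i)).trans (by linarith)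
  obtain ⟨wK, hwKd⟩ : ∃ wK : ℕ → (Module.Free.ChooseBasisIndex ℤ (NumberField.RingOfIntegers K) → ℕ) →
      (Module.Free.ChooseBasisIndex ℤ (NumberField.RingOfIntegers K) → ℕ) → K, ∀ H l x, wK H l x =
    ∏ i, ((δ : K) ^ (M * H) * (α i) ^ (Tr (η l * η x * β i))) := ⟨_, fun _ _ _ => rfl⟩
  have hwK : ∀ (D N : ℕ) l x, (∀ i, l i < D) → (∀ i, x i < N) → ∀ i, 
      IsIntegral ℤ ((δ : K) ^ (M * (D * N)) * (α i) ^ (Tr (η l * η x * β i))) ∧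
      NumberField.house ((δ : K) ^ (M * (D * N)) * (α i) ^ (Tr (η l * η x * β i))) ≤ B ^ (M * (D * N)) := by
    intro D N l x hl hx i
    exact bk_pow_int δ (α i) B hB1 hBδ (hα0 i) (hδ i).1 (hδ i).2 (hBa i) (hBb i) _ _ (hMt D N l x hl hx i)
  have hwKint : ∀ (D N : ℕ) l x, (∀ i, l i < D) → (∀ i, x i < N) → IsIntegral ℤ (wK (D * N) l x) := by
    intro D N l x hl hx
    rw [hwKd]
    exact IsIntegral.prod _ (fun i _ => (hwK D N l x hl hx i).1)
  obtain ⟨W, hWK⟩ : ∃ W : ℕ → (Module.Free.ChooseBasisIndex ℤ (NumberField.RingOfIntegers K) → ℕ) →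
      (Module.Free.ChooseBasisIndex ℤ (NumberField.RingOfIntegers K) → ℕ) → NumberField.RingOfIntegers K,
      ∀ (D N : ℕ) l x, (∀ i, l i < D) → (∀ i, x i < N) → (W (D * N) l x : K) = wK (D * N) l x := by
    refine ⟨fun H l x => if h : ∃ z : NumberField.RingOfIntegers K, (z : K) = wK H l x then h.choose else 0, ?_⟩
    intro D N l x hl hx
    have : ∃ z : NumberField.RingOfIntegers K, (z : K) = wK (D * N) l x :=
      ⟨⟨_, hwKint D N l x hl hx⟩, rfl⟩
    beta_reduce
    rw [dif_pos this]
    exact this.choose_spec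
  set n := Fintype.card ι with hn
  set C1 : ℝ := ∑ σ, ∑ j, ‖c σ j‖ with hC1
  set C2 : ℝ := Real.log B * M * n with hC2
  set C4 : ℝ := ∑ i, g * (A * A * Bβ) * ‖lam i‖ with hC4
  have hC10 : 0 ≤ C1 := Finset.sum_nonneg (fun _ _ => Finset.sum_nonneg (fun _ _ => norm_nonneg _))
  have hlB : 0 ≤ Real.log B := Real.log_nonneg hB1
  have hC20 : 0 ≤ C2 := by positivity
  have hC40 : 0 ≤ C4 := Finset.sum_nonneg (fun _ _ => by positivity)
  set C : ℝ := 1 + C1 + C2 + A + C4 with hC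
  let d : BkData K (Module.Free.ChooseBasisIndex ℤ (NumberField.RingOfIntegers K)) {σ : K ≃ₐ[ℚ] K // w σ ≠ 0} :=
    { φ := φ
      r := fun σ l => NumberField.RingOfIntegers.mapRingHom (σ.1 : K →+* K) (η l)
      Y := fun j l => ∑ i, (Tr (η l * ω j * β i) : ℂ) * lam i
      b := fun j σ => φ (σ.1 (ω j : K)) * w σ.1
      c := c
      W := W
      Δ := (δ : ℝ) ^ (M * n)
      C := C
      hΔ := one_le_pow₀ (by exact_mod_cast hδ1)
      hC := by linarith
      hY := by
        intro j l
        rw [hYG]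
        apply Finset.sum_congr rfl
        intro ρ _
        rw [NumberField.RingOfIntegers.mapRingHom_apply]
        simp
        ring
      hr := by
        intro ρ l
        have h1 := hc (fun ρ => φ (ρ.1 (η l : K))) ρ
        rw [NumberField.RingOfIntegers.mapRingHom_apply]
        refine h1.trans ?_
        apply Finset.sum_congr rfl
        intro j _
        rw [hYG]
        congr 1
        apply Finset.sum_congr rfl
        intro ρ _
        simp [hω]
        ring
      hc := by
        intro ρ j
        have h1 : ‖c ρ j‖ ≤ ∑ j, ‖c ρ j‖ :=
          Finset.single_le_sum (f := fun j => ‖c ρ j‖) (fun _ _ => norm_nonneg _) (Finset.mem_univ j)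
        have h2 : ∑ j, ‖c ρ j‖ ≤ C1 :=
          Finset.single_le_sum (f := fun ρ => ∑ j, ‖c ρ j‖)
            (fun _ _ => Finset.sum_nonneg (fun _ _ => norm_nonneg _)) (Finset.mem_univ ρ)
        linarith
      hW := by
        intro D N l x hl hx
        rw [hWK D N l x hl hx]
        simp only [hwKd, map_prod, map_mul, map_pow, map_natCast, map_zpow₀, ← hexp]
        rw [Finset.prod_mul_distrib, Finset.prod_const]
        congr 1
        · rw [Finset.card_univ, ← hn]
          push_cast
          rw [← pow_mul, ← pow_mul]
          congr 1
          ring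
        · simp only [← Complex.exp_int_mul]
          rw [← Complex.exp_sum]
          congr 1
          simp only [Finset.mul_sum]
          rw [Finset.sum_comm]
          apply Finset.sum_congr rfl
          intro i _
          have : Tr (η l * η x * β i) = ∑ j, (x j : ℤ) * Tr (η l * ω j * β i) := by
            have h2 : η l * η x * β i = ∑ j, (x j : ℤ) • (η l * ω j * β i) := by
              rw [hη x, Finset.mul_sum, Finset.sum_mul]
              apply Finset.sum_congr rfl
              intro j _
              rw [zsmul_eq_mul]
              push_cast
              ring
            rw [h2, hTr, map_sum]
            simp only [map_smul, smul_eq_mul, hTr]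
          rw [this]
          push_cast
          rw [Finset.sum_mul]
          apply Finset.sum_congr rfl
          intro j _
          ring
      hWb := by
        intro D N l x hl hx
        rw [hWK D N l x hl hx]
        have h1 : NumberField.house (wK (D * N) l x) ≤ (B ^ (M * (D * N))) ^ n := by
          apply bk_house_le
          intro ψ
          rw [hwKd, map_prod, norm_prod]
          calc _ ≤ ∏ i : ι, (B ^ (M * (D * N))) := by
                apply Finset.prod_le_prod (fun _ _ => norm_nonneg _)
                intro i _
                exact (NumberField.norm_embedding_le_house _ ψ).trans (hwK D N l x hl hx i).2
            _ = _ := by rw [Finset.prod_const, Finset.card_univ]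
        refine h1.trans ?_
        rw [← Real.exp_log (by linarith : (0:ℝ) < B), ← Real.exp_nat_mul, ← Real.exp_nat_mul]
        apply Real.exp_le_exp.mpr
        push_cast
        calc (n:ℝ) * (M * (D * N) * Real.log B) = C2 * (D * N) := by rw [hC2]; ring
          _ ≤ C * (D * N) := by
            apply mul_le_mul_of_nonneg_right _ (by positivity)
            linarith
      hrb := by
        intro D ρ l hl
        rw [NumberField.RingOfIntegers.mapRingHom_apply]
        apply bk_house_le
        intro ψ
        refine (NumberField.norm_embedding_le_house (η l : K) (ψ.comp (ρ.1 : K →+* K))).trans ((hηb D l hl).trans ?_)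
        apply mul_le_mul_of_nonneg_right _ (by positivity)
        linarith
      hYb := by
        intro D j l hl
        refine (norm_sum_le _ _).trans ?_
        calc _ ≤ ∑ i, (g * (A * A * Bβ) * ‖lam i‖) * D := by
              apply Finset.sum_le_sum
              intro i _
              rw [norm_mul, Complex.norm_intCast]
              calc _ ≤ (g * ((A * D) * A * Bβ)) * ‖lam i‖ := by
                    apply mul_le_mul_of_nonneg_right _ (norm_nonneg _)
                    refine (hTrb _ _ _).trans ?_
                    have a1 := hηb D l hl
                    have a2 := hωb j
                    have a3 := hβb i
                    have b1 := NumberField.house_nonneg (η l : K)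
                    have b2 := NumberField.house_nonneg (ω j : K)
                    have b3 := NumberField.house_nonneg (β i : K)
                    exact mul_le_mul_of_nonneg_left (mul_le_mul (mul_le_mul a1 a2 b2 (b1.trans a1)) a3 b3
                      (mul_nonneg (b1.trans a1) hA0)) hg0
                _ = _ := by ring
          _ = C4 * D := by rw [hC4, ← Finset.sum_mul]
          _ ≤ C * D := by
            apply mul_le_mul_of_nonneg_right _ (by positivity)
            linarith
      hinj := by
        refine ⟨⟨σ, hσ⟩, ?_⟩
        intro l l' h
        have h1 : η l = η l' := by
          have h2 := congrArg (fun x : NumberField.RingOfIntegers K => (x : K)) h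
          simp only [NumberField.RingOfIntegers.mapRingHom_apply] at h2
          exact NumberField.RingOfIntegers.ext (σ.injective h2)
        have h3 : ∀ l, η l = ∑ i, (l i : ℤ) • ω i := by
          intro l
          rw [hη]
          apply Finset.sum_congr rfl
          intro i _
          rw [zsmul_eq_mul]; simp
        rw [h3, h3] at h1
        have h4 := congrArg (fun z => ω.repr z) h1
        funext i
        have h5 := DFunLike.congr_fun h4 i
        simp only [ω.repr_sum_self] at h5
        exact_mod_cast h5 }
  refine d.contra ?_
  rw [← Module.finrank_eq_card_chooseBasisIndex, NumberField.RingOfIntegers.rank, ← IsGalois.card_aut_eq_finrank,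
    Nat.card_eq_fintype_card]
  refine Fintype.card_subtype_lt (x := (1 : K ≃ₐ[ℚ] K)) ?_
  simpa [hw] using h0

end
end

section
section
variable {q : ℕ} [NeZero q] {z : ℂ}

lemma er_pow_iff (hz : IsPrimitiveRoot z q) (a b : ℕ) : z ^ a = z ^ b ↔ (a : ZMod q) = b := by
  have hz0 : z ≠ 0 := hz.ne_zero (NeZero.ne q)
  obtain ⟨u, rfl⟩ : ∃ u : ℂˣ, (u : ℂ) = z := ⟨Units.mk0 z hz0, rfl⟩
  rw [IsPrimitiveRoot.coe_units_iff] at hz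
  rw [ZMod.natCast_eq_natCast_iff, hz.eq_orderOf, ← pow_eq_pow_iff_modEq, ← Units.val_pow_eq_pow_val,
    ← Units.val_pow_eq_pow_val, Units.val_inj]

lemma er_fourier (hz : IsPrimitiveRoot z q) (Ψ : ZMod q → ℂ) (n : ℕ) :
    Ψ n = (1 / (q:ℂ)) * ∑ k ∈ range q, (∑ a, Ψ a * z ^ (k * a.val)) * (z⁻¹ ^ k) ^ n := by
  have hq : (q:ℂ) ≠ 0 := by exact_mod_cast NeZero.ne q
  have hz0 : z ≠ 0 := hz.ne_zero (NeZero.ne q)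
  have h1 : ∀ a : ZMod q, ∑ k ∈ range q, (z ^ a.val * z⁻¹ ^ n) ^ k = if a = n then (q:ℂ) else 0 := by
    intro a
    split_ifs with h
    · have : z ^ a.val * z⁻¹ ^ n = 1 := by
        have e : z ^ a.val = z ^ n := by
          rw [er_pow_iff hz, ZMod.natCast_zmod_val, h]
        rw [e, ← mul_pow, mul_inv_cancel₀ hz0, one_pow]
      simp only [this, one_pow, Finset.sum_const, card_range, nsmul_eq_mul, mul_one]
    · have hne : z ^ a.val * z⁻¹ ^ n ≠ 1 := by
        intro e
        apply h
        have e2 : z ^ a.val = z ^ n := by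
          rw [inv_pow] at e
          field_simp at e
          exact e
        rw [er_pow_iff hz, ZMod.natCast_zmod_val] at e2
        exact e2
      rw [geom_sum_eq hne]
      have : (z ^ a.val * z⁻¹ ^ n) ^ q = 1 := by
        rw [mul_pow, ← pow_mul, ← pow_mul, mul_comm _ q, mul_comm _ q, pow_mul, pow_mul, hz.pow_eq_one, inv_pow,
          hz.pow_eq_one]
        simp
      rw [this]; simp
  have h2 : ∑ k ∈ range q, (∑ a, Ψ a * z ^ (k * a.val)) * (z⁻¹ ^ k) ^ n = ∑ a, Ψ a * if a = n then (q:ℂ) else 0 := by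
    simp only [← h1, Finset.sum_mul, Finset.mul_sum]
    rw [Finset.sum_comm]
    apply Finset.sum_congr rfl
    intro a _
    apply Finset.sum_congr rfl
    intro k _
    rw [mul_pow, mul_assoc, ← pow_mul, ← pow_mul, ← pow_mul]
    ring_nf
  rw [h2]
  simp
  field_simp

lemma er_hasSum (hz : IsPrimitiveRoot z q) (Ψ : ZMod q → ℂ) (x : ℝ) (hx0 : 0 ≤ x) (hx : x < 1) :
    HasSum (fun n : ℕ => Ψ n / n * (x:ℂ) ^ n)
      (-(1 / (q:ℂ)) * ∑ k ∈ range q, (∑ a, Ψ a * z ^ (k * a.val)) * Complex.log (1 - z⁻¹ ^ k * x)) := by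
  have hn : ∀ k : ℕ, ‖z⁻¹ ^ k * x‖ < 1 := by
    intro k
    rw [norm_mul, norm_pow, norm_inv, hz.norm'_eq_one (NeZero.ne q)]
    simp [abs_of_nonneg hx0, hx]
  have h1 := hasSum_sum (s := range q) (fun k _ => (Complex.hasSum_taylorSeries_neg_log (hn k)).mul_left
    (∑ a, Ψ a * z ^ (k * a.val)))
  have h2 := h1.mul_left (1 / (q:ℂ))
  convert! h2 using 1
  · funext n
    rw [er_fourier hz Ψ n, mul_div_assoc, mul_assoc]
    congr 1
    rw [Finset.sum_div, Finset.sum_mul]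
    apply Finset.sum_congr rfl
    intro k _
    rw [mul_pow]
    ring
  · simp only [mul_neg, Finset.sum_neg_distrib]
    ring

lemma er_slit (hz : IsPrimitiveRoot z q) {k : ℕ} (hk : k ∈ range q) (hk0 : k ≠ 0) :
    1 - z⁻¹ ^ k ∈ Complex.slitPlane := by
  have hz0 : z ≠ 0 := hz.ne_zero (NeZero.ne q)
  have h1 : ‖z⁻¹ ^ k‖ = 1 := by
    rw [norm_pow, norm_inv, hz.norm'_eq_one (NeZero.ne q)]; simp
  have h2 : z⁻¹ ^ k ≠ 1 := by
    rw [inv_pow]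
    intro h
    rw [inv_eq_one] at h
    have := Nat.le_of_dvd (Nat.pos_of_ne_zero hk0) (hz.dvd_of_pow_eq_one k h)
    rw [mem_range] at hk
    omega
  left
  have h3 : (z⁻¹ ^ k).re ≤ 1 := h1 ▸ Complex.re_le_norm _
  rcases h3.lt_or_eq with h | h
  · simp only [Complex.sub_re, Complex.one_re]; linarith
  · exfalso; apply h2
    have h4 := Complex.sq_norm (z⁻¹ ^ k)
    rw [h1, Complex.normSq_apply, h] at h4
    apply Complex.ext
    · simpa using h
    · have : (z⁻¹ ^ k).im * (z⁻¹ ^ k).im = 0 := by linarith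
      simpa using this

lemma er_abel (hz : IsPrimitiveRoot z q) (Ψ : ZMod q → ℂ) (l : ℂ)
    (h : Tendsto (fun N => ∑ n ∈ range N, Ψ n / n) atTop (𝓝 l)) :
    ∑ a, Ψ a = 0 ∧ l = -(1 / (q:ℂ)) * ∑ k ∈ (range q).erase 0, (∑ a, Ψ a * z ^ (k * a.val)) *
      Complex.log (1 - z⁻¹ ^ k) := by
  have hq : (q:ℂ) ≠ 0 := by exact_mod_cast NeZero.ne q
  have h0 : 0 ∈ range q := mem_range.mpr (NeZero.pos q)
  have h1 := Complex.tendsto_tsum_powerSeries_nhdsWithin_lt h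
  rw [tendsto_map'_iff] at h1
  set R : ℂ := -(1 / (q:ℂ)) * ∑ k ∈ (range q).erase 0, (∑ a, Ψ a * z ^ (k * a.val)) *
      Complex.log (1 - z⁻¹ ^ k) with hR
  have hev : ∀ᶠ x : ℝ in 𝓝[<] 1, 0 ≤ x ∧ x < 1 := by
    have h2 : Set.Ico (0:ℝ) 1 ∈ 𝓝[<] (1:ℝ) := Ico_mem_nhdsLT (by norm_num)
    filter_upwards [h2] with x hx using ⟨hx.1, hx.2⟩
  have hR1 : Tendsto (fun x : ℝ => -(1 / (q:ℂ)) * ∑ k ∈ (range q).erase 0, (∑ a, Ψ a * z ^ (k * a.val)) *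
      Complex.log (1 - z⁻¹ ^ k * x)) (𝓝[<] 1) (𝓝 R) := by
    apply Tendsto.const_mul
    apply tendsto_finsetSum
    intro k hk
    apply Tendsto.const_mul
    have hs := er_slit hz (Finset.mem_of_mem_erase hk) (Finset.ne_of_mem_erase hk)
    have hc : ContinuousAt (fun x : ℝ => Complex.log (1 - z⁻¹ ^ k * x)) 1 := by
      apply ContinuousAt.clog
      · fun_prop
      · simpa using hs
    have := hc.tendsto.mono_left (nhdsWithin_le_nhds (s := Set.Iio 1))
    simpa using this
  have hmain : Tendsto (fun x : ℝ => -(1 / (q:ℂ)) * (∑ a, Ψ a) * Complex.log (1 - x)) (𝓝[<] 1) (𝓝 (l - R)) := by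
    refine (h1.sub hR1).congr' ?_
    filter_upwards [hev] with x hx
    simp only [Function.comp]
    rw [(er_hasSum hz Ψ x hx.1 hx.2).tsum_eq, ← Finset.add_sum_erase _ _ h0]
    simp
    ring
  have hsum : ∑ a, Ψ a = 0 := by
    by_contra hne
    have hc : -(1 / (q:ℂ)) * (∑ a, Ψ a) ≠ 0 := by
      apply mul_ne_zero _ hne
      simp [hq]
    have h3 : Tendsto (fun x : ℝ => Complex.log (1 - x)) (𝓝[<] 1) (𝓝 ((-(1 / (q:ℂ)) * (∑ a, Ψ a))⁻¹ * (l - R))) := by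
      refine (hmain.const_mul ((-(1 / (q:ℂ)) * (∑ a, Ψ a))⁻¹)).congr ?_
      intro x
      rw [← mul_assoc, inv_mul_cancel₀ hc, one_mul]
    have h4 := (Complex.continuous_re.tendsto _).comp h3
    have h5 : Tendsto (fun x : ℝ => Real.log (1 - x)) (𝓝[<] 1) atBot := by
      apply Real.tendsto_log_nhdsGT_zero.comp
      rw [tendsto_nhdsWithin_iff]
      constructor
      · have : Tendsto (fun x : ℝ => 1 - x) (𝓝 1) (𝓝 (1 - 1)) := by
          exact (continuous_const.sub continuous_id).tendsto _
        rw [sub_self] at this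
        exact this.mono_left nhdsWithin_le_nhds
      · filter_upwards [hev] with x hx
        simp [hx.2]
    have h6 : Tendsto (fun x : ℝ => Real.log (1 - x)) (𝓝[<] 1) (𝓝 ((-(1 / (q:ℂ)) * (∑ a, Ψ a))⁻¹ * (l - R)).re) := by
      refine h4.congr' ?_
      filter_upwards [hev] with x hx
      simp only [Function.comp]
      rw [Complex.log_re]
      congr 1
      rw [show (1 - (x:ℂ)) = ((1 - x : ℝ) : ℂ) by push_cast; ring, Complex.norm_real, Real.norm_of_nonneg (by linarith)]
    exact not_tendsto_nhds_of_tendsto_atBot h5 _ h6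
  refine ⟨hsum, ?_⟩
  rw [hsum] at hmain
  simp only [mul_zero, zero_mul] at hmain
  have := tendsto_nhds_unique hmain tendsto_const_nhds
  linear_combination this

end
end

section
section
variable {q : ℕ} [NeZero q]

lemma er_sum_range (g : ZMod q → ℂ) : ∑ i ∈ range q, g i = ∑ a, g a := by
  refine Finset.sum_bij' (fun i _ => (i : ZMod q)) (fun a _ => a.val) ?_ ?_ ?_ ?_ ?_
  · intro i _; exact Finset.mem_univ _
  · intro a _; exact mem_range.mpr (ZMod.val_lt a)
  · intro i hi; exact ZMod.val_cast_of_lt (mem_range.mp hi)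
  · intro a _; exact ZMod.natCast_zmod_val a
  · intro i _; rfl

lemma er_conv (Ψ : ZMod q → ℂ) (h0 : ∑ a, Ψ a = 0) :
    ∃ l, Tendsto (fun N => ∑ n ∈ range N, Ψ n / n) atTop (𝓝 l) := by
  have hper : ∀ n : ℕ, ∑ i ∈ range q, Ψ ((n + i : ℕ) + 1) = 0 := by
    intro n
    have h1 := er_sum_range (fun a : ZMod q => Ψ (((n + 1 : ℕ) : ZMod q) + a))
    rw [Fintype.sum_equiv (Equiv.addLeft (((n + 1 : ℕ) : ZMod q))) (fun a : ZMod q => Ψ (((n + 1 : ℕ) : ZMod q) + a)) Ψ (fun _ => rfl), h0] at h1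
    rw [← h1]
    apply Finset.sum_congr rfl
    intro i _
    congr 1
    push_cast
    ring
  set P : ℕ → ℂ := fun n => ∑ i ∈ range n, Ψ (i + 1) with hP
  have hPp : Function.Periodic P q := by
    intro n
    simp only [hP]
    rw [Finset.sum_range_add]
    have := hper n
    push_cast at this ⊢
    rw [this, add_zero]
  have hb : ∀ n, ‖P n‖ ≤ ∑ m ∈ range q, ‖P m‖ := by
    intro n
    rw [← hPp.map_mod_nat n]
    exact Finset.single_le_sum (f := fun m => ‖P m‖) (fun _ _ => norm_nonneg _)
      (mem_range.mpr (Nat.mod_lt _ (NeZero.pos q)))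
  have hc := Antitone.cauchySeq_series_mul_of_tendsto_zero_of_bounded (E := ℂ) (f := fun n : ℕ => 1 / ((n:ℝ) + 1))
    (z := fun n => Ψ (n + 1)) (by
      intro a b hab
      have : (a:ℝ) ≤ b := by exact_mod_cast hab
      apply one_div_le_one_div_of_le <;> linarith [(Nat.cast_nonneg a : (0:ℝ) ≤ a)])
    tendsto_one_div_add_atTop_nhds_zero_nat hb
  obtain ⟨l, hl⟩ := cauchySeq_tendsto_of_complete hc
  refine ⟨l, ?_⟩
  rw [← tendsto_add_atTop_iff_nat 1]
  refine hl.congr ?_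
  intro N
  rw [Finset.sum_range_succ']
  simp only [Nat.cast_zero, div_zero, add_zero]
  apply Finset.sum_congr rfl
  intro i _
  rw [Complex.real_smul]
  push_cast
  ring

theorem er_conj (Φ : ZMod q → ℤ) (h : Tendsto (fun N => ∑ n ∈ range N, (Φ n : ℂ) / n) atTop (𝓝 0))
    (u : (ZMod q)ˣ) : Tendsto (fun N => ∑ n ∈ range N, (Φ (u * n) : ℂ) / n) atTop (𝓝 0) := by
  have hcyc : IsCyclotomicExtension {q} ℚ (CyclotomicField q ℚ) :=
    CyclotomicField.isCyclotomicExtension q ℚ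
  have hG : IsGalois ℚ (CyclotomicField q ℚ) := IsCyclotomicExtension.isGalois {q} ℚ (CyclotomicField q ℚ)
  have hζ := IsCyclotomicExtension.zeta_spec q ℚ (CyclotomicField q ℚ)
  obtain ⟨φ⟩ : Nonempty (CyclotomicField q ℚ →+* ℂ) := inferInstance
  set ζ := IsCyclotomicExtension.zeta q ℚ (CyclotomicField q ℚ) with hζd
  obtain ⟨z, hzd⟩ : ∃ z, z = φ ζ := ⟨_, rfl⟩
  have hz : IsPrimitiveRoot z q := hzd ▸ hζ.map_of_injective φ.injective
  obtain ⟨hs0, hl0⟩ := er_abel hz (fun a => (Φ a : ℂ)) 0 h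
  have hs1 : ∑ a : ZMod q, (Φ (u * a) : ℂ) = 0 := by
    rw [← hs0]
    exact Equiv.sum_comp (Units.mulLeft u) (fun a => (Φ a : ℂ))
  obtain ⟨l, hl⟩ := er_conv (fun a : ZMod q => (Φ (u * a) : ℂ)) hs1
  have hl1 := (er_abel hz (fun a => (Φ (u * a) : ℂ)) l hl).2
  suffices hll : l = 0 by rwa [hll] at hl
  have hirr : Irreducible (Polynomial.cyclotomic q ℚ) := Polynomial.cyclotomic.irreducible_rat (NeZero.pos q)
  set m : ℕ := (u⁻¹ : (ZMod q)ˣ).val.val with hm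
  have hmc : m.Coprime q := ZMod.val_coe_unit_coprime _
  have hμ : IsPrimitiveRoot (ζ ^ m) q := hζ.pow_of_coprime m hmc
  set σ := IsCyclotomicExtension.fromZetaAut hμ hirr with hσd
  have hσ : σ ζ = ζ ^ m := IsCyclotomicExtension.fromZetaAut_spec hμ hirr
  let β : {k // k ∈ (range q).erase 0} → NumberField.RingOfIntegers (CyclotomicField q ℚ) := fun k =>
    ∑ a, (Φ a : NumberField.RingOfIntegers (CyclotomicField q ℚ)) * hζ.toInteger ^ (k.1 * a.val)
  have hβ : ∀ k, (β k : CyclotomicField q ℚ) = ∑ a, (Φ a : CyclotomicField q ℚ) * ζ ^ (k.1 * a.val) := by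
    intro k
    have ht : algebraMap (NumberField.RingOfIntegers (CyclotomicField q ℚ)) (CyclotomicField q ℚ)
      hζ.toInteger = ζ := rfl
    simp [β, ht]
  have hq : (q:ℂ) ≠ 0 := by exact_mod_cast NeZero.ne q
  have hb0 : ∑ k : {k // k ∈ (range q).erase 0}, φ (β k : CyclotomicField q ℚ) * Complex.log (1 - z⁻¹ ^ k.1) = 0 := by
    have h2 : ∑ k ∈ (range q).erase 0, (∑ a, (Φ a : ℂ) * z ^ (k * a.val)) * Complex.log (1 - z⁻¹ ^ k) = 0 := by
      have := hl0.symm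
      rw [mul_eq_zero] at this
      refine this.resolve_left ?_
      simp [hq]
    rw [← Finset.sum_coe_sort] at h2
    rw [← h2]
    apply Finset.sum_congr rfl
    intro k _
    rw [hβ]
    simp [hzd]
  have hbk := baker_galois φ β (fun k => 1 - ζ⁻¹ ^ k.1) (fun k => Complex.log (1 - z⁻¹ ^ k.1)) (by
    intro k
    rw [Complex.exp_log]
    · simp [hzd]
    · exact Complex.slitPlane_ne_zero (er_slit hz (Finset.mem_of_mem_erase k.2) (Finset.ne_of_mem_erase k.2))) hb0 σ
  rw [hl1]
  rw [mul_eq_zero]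
  right
  rw [← Finset.sum_coe_sort, ← hbk]
  apply Finset.sum_congr rfl
  intro k _
  congr 1
  rw [hβ]
  simp only [map_sum, map_mul, map_intCast, map_pow, hσ, ← hzd]
  refine Eq.trans ?_ (Equiv.sum_comp (Units.mulLeft u) _)
  apply Finset.sum_congr rfl
  intro a _
  simp only [Units.mulLeft_apply]
  congr 1
  rw [← pow_mul, er_pow_iff hz]
  push_cast
  rw [ZMod.natCast_zmod_val, ZMod.natCast_zmod_val, ZMod.natCast_zmod_val]
  have : ((u⁻¹ : (ZMod q)ˣ) : ZMod q) * (u : ZMod q) = 1 := by simp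
  linear_combination (-(k.1 : ZMod q) * a) * this

end
end

section
lemma er_dir_bound (g : ℕ → ℂ) (hg : Tendsto (fun N => ∑ n ∈ Icc 1 N, g n) atTop (𝓝 0))
    {δ : ℝ} (hδ : 0 < δ) : ∃ C : ℝ, ∀ ε : ℝ, 0 < ε → LSeriesSummable g ε →
      ‖LSeries g ε‖ ≤ δ + ε * C := by
  obtain ⟨C, hC⟩ := hg.norm.bddAbove_range
  have hC' : ∀ N, ‖∑ n ∈ Icc 1 N, g n‖ ≤ C := fun N => hC ⟨N, rfl⟩
  have hC0 : 0 ≤ C := (norm_nonneg _).trans (hC' 0)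
  obtain ⟨T, hT⟩ := (Metric.tendsto_atTop.mp hg) δ hδ
  refine ⟨C * T, fun ε hε hsum => ?_⟩
  rw [LSeries_eq_mul_integral g le_rfl (by simpa using hε) hsum]
  swap
  · refine Asymptotics.IsBigO.of_bound C (Eventually.of_forall fun N => ?_)
    simpa using hC' N
  rw [norm_mul, Complex.norm_real, Real.norm_of_nonneg hε.le]
  have hint : MeasureTheory.IntegrableOn (fun t : ℝ => t ^ (-(ε + 1))) (Set.Ioi 1) :=
    integrableOn_Ioi_rpow_of_lt (by linarith) zero_lt_one
  have hint2 : MeasureTheory.IntegrableOn ((Set.Ioc (0:ℝ) T).indicator fun _ => C) (Set.Ioi 1) := by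
    apply MeasureTheory.Integrable.integrableOn
    rw [MeasureTheory.integrable_indicator_iff measurableSet_Ioc]
    simp
  have hle : ‖∫ (t : ℝ) in Set.Ioi 1, (∑ k ∈ Icc 1 ⌊t⌋₊, g k) * (t : ℂ) ^ (-((ε : ℂ) + 1))‖ ≤
      ∫ t in Set.Ioi (1:ℝ), (δ * t ^ (-(ε + 1)) + (Set.Ioc (0:ℝ) T).indicator (fun _ => C) t) := by
    apply MeasureTheory.norm_integral_le_of_norm_le ((hint.const_mul δ).add hint2)
    rw [MeasureTheory.ae_restrict_iff' measurableSet_Ioi]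
    refine Eventually.of_forall fun t ht => ?_
    have ht1 : 1 < t := ht
    simp only [Pi.add_apply]
    have ht0 : 0 < t := by linarith
    rw [norm_mul, Complex.norm_cpow_eq_rpow_re_of_pos ht0]
    have hre : (-((ε : ℂ) + 1)).re = -(ε + 1) := by simp
    rw [hre]
    have hp : 0 ≤ t ^ (-(ε + 1)) := Real.rpow_nonneg ht0.le _
    have hp1 : t ^ (-(ε + 1)) ≤ 1 := Real.rpow_le_one_of_one_le_of_nonpos ht1.le (by linarith)
    by_cases htT : t ≤ T
    · rw [Set.indicator_of_mem (show t ∈ Set.Ioc (0:ℝ) T from ⟨ht0, htT⟩)]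
      have h1 := hC' ⌊t⌋₊
      have h2 := norm_nonneg (∑ k ∈ Icc 1 ⌊t⌋₊, g k)
      nlinarith [mul_nonneg hδ.le hp]
    · rw [Set.indicator_of_notMem (show t ∉ Set.Ioc (0:ℝ) T from fun h => htT h.2), add_zero]
      have h1 := hT ⌊t⌋₊ (Nat.le_floor (not_le.mp htT).le)
      rw [dist_zero_right] at h1
      exact mul_le_mul_of_nonneg_right h1.le hp
  have hI1 : ∫ t in Set.Ioi (1:ℝ), t ^ (-(ε + 1)) = 1 / ε := by
    rw [integral_Ioi_rpow_of_lt (by linarith) zero_lt_one, Real.one_rpow]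
    rw [show -(ε + 1) + 1 = -ε by ring, neg_div_neg_eq]
  have hI2 : ∫ t in Set.Ioi (1:ℝ), (Set.Ioc (0:ℝ) T).indicator (fun _ => C) t ≤ C * T := by
    calc _ ≤ ∫ t, (Set.Ioc (0:ℝ) T).indicator (fun _ => C) t := by
          apply MeasureTheory.setIntegral_le_integral
          · rw [MeasureTheory.integrable_indicator_iff measurableSet_Ioc]
            simp
          · exact Eventually.of_forall fun t => Set.indicator_nonneg (fun _ _ => hC0) t
      _ = C * T := by
          rw [MeasureTheory.integral_indicator measurableSet_Ioc]
          simp [mul_comm]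
  rw [MeasureTheory.integral_add (hint.const_mul δ) hint2, MeasureTheory.integral_const_mul, hI1] at hle
  calc ε * _ ≤ ε * (δ * (1 / ε) + C * T) := by gcongr; linarith
    _ = δ + ε * (C * T) := by field_simp

lemma er_dir {q : ℕ} [NeZero q] (Ψ : ZMod q → ℂ)
    (h : Tendsto (fun N => ∑ n ∈ range N, Ψ n / n) atTop (𝓝 0)) :
    Tendsto (fun s : ℝ => LSeries (fun n => Ψ n) s) (𝓝[>] 1) (𝓝 0) := by
  have hg : Tendsto (fun N : ℕ => ∑ n ∈ Icc 1 N, Ψ n / n) atTop (𝓝 0) := by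
    have := h.comp (tendsto_add_atTop_nat 1)
    refine this.congr fun N => ?_
    simp only [Function.comp]
    rw [Finset.range_eq_Ico, Finset.sum_eq_sum_Ico_succ_bot (by omega)]
    simp only [Nat.cast_zero, div_zero, zero_add]
    rfl
  have hterm : ∀ s : ℝ, ∀ n, LSeries.term (fun n => Ψ n / n) ((s - 1 : ℝ) : ℂ) n =
      LSeries.term (fun n => Ψ n) s n := by
    intro s n
    rcases eq_or_ne n 0 with rfl | hn
    · simp
    · rw [LSeries.term_of_ne_zero hn, LSeries.term_of_ne_zero hn]
      have hn' : (n:ℂ) ≠ 0 := by exact_mod_cast hn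
      push_cast
      rw [Complex.cpow_sub _ _ hn', Complex.cpow_one]
      field_simp
  rw [Metric.tendsto_nhds]
  intro δ hδ
  obtain ⟨C, hC⟩ := er_dir_bound _ hg (half_pos hδ)
  have hlim : Tendsto (fun s : ℝ => δ / 2 + (s - 1) * C) (𝓝[>] 1) (𝓝 (δ / 2 + (1 - 1) * C)) :=
    tendsto_nhdsWithin_of_tendsto_nhds (ContinuousAt.tendsto (by fun_prop))
  have hev := hlim.eventually_lt_const (show δ / 2 + (1 - 1) * C < δ by linarith)
  filter_upwards [hev, self_mem_nhdsWithin] with s hs hs1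
  have hs1' : 1 < s := hs1
  rw [dist_zero_right]
  refine lt_of_le_of_lt ?_ hs
  have := hC (s - 1) (by linarith) (by
    have h2 := ZMod.LSeriesSummable_of_one_lt_re Ψ (s := (s:ℂ)) (by simpa using hs1')
    refine h2.congr fun n => ?_
    exact (hterm s n).symm)
  unfold LSeries at this ⊢
  rw [tsum_congr (hterm s)] at this
  exact this
end

section
lemma er_one_mem (s : Finset ℕ) : 1 ∈ Nat.factoredNumbers s := by
  rw [Nat.mem_factoredNumbers']
  intro p hp h
  exact absurd (Nat.dvd_one.mp h) hp.one_lt.ne'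

lemma er_decomp_exists (q n : ℕ) (hq : q ≠ 0) (hn : n ≠ 0) :
    ∃ a b : ℕ, a * b = n ∧ a.Coprime q ∧ b ∈ Nat.factoredNumbers q.primeFactors := by
  induction n using Nat.strong_induction_on with
  | _ n ih =>
    by_cases hc : n.Coprime q
    · exact ⟨n, 1, mul_one n, hc, er_one_mem _⟩
    · obtain ⟨p, hp, hpn, hpq⟩ := Nat.Prime.not_coprime_iff_dvd.mp hc
      obtain ⟨m, rfl⟩ := hpn
      have hm : m ≠ 0 := right_ne_zero_of_mul hn
      have hlt : m < p * m := by nlinarith [hp.two_le, Nat.pos_of_ne_zero hm]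
      obtain ⟨a, b, hab, ha, hb⟩ := ih m hlt hm
      refine ⟨a, p * b, by rw [← hab]; ring, ha, ?_⟩
      apply Nat.mul_mem_factoredNumbers _ hb
      rw [Nat.mem_factoredNumbers']
      intro r hr hrp
      rw [(Nat.prime_dvd_prime_iff_eq hr hp).mp hrp]
      exact Nat.mem_primeFactors.mpr ⟨hp, hpq, hq⟩

lemma er_cop {q a b : ℕ} (ha : a.Coprime q) (hb : b ∈ Nat.factoredNumbers q.primeFactors) :
    a.Coprime b := by
  by_contra h
  obtain ⟨p, hp, hpa, hpb⟩ := Nat.Prime.not_coprime_iff_dvd.mp h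
  have h1 := Nat.dvd_of_mem_primeFactors (Nat.mem_factoredNumbers'.mp hb p hp hpb)
  exact Nat.Prime.not_coprime_iff_dvd.mpr ⟨p, hp, hpa, h1⟩ ha

section
variable {q : ℕ} [NeZero q]

open Classical in
lemma er_convol (χ : DirichletCharacter ℂ q) (F : ZMod q → ℂ)
    (hF : ∀ (k : (ZMod q)ˣ) (x : ZMod q), F (k * x) = χ k * F x) {n : ℕ} (hn : n ≠ 0) :
    LSeries.convolution (fun n => χ n)
      (fun n => if n ∈ Nat.factoredNumbers q.primeFactors then F n else 0) n = F n := by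
  obtain ⟨a, b, hab, ha, hb⟩ := er_decomp_exists q n (NeZero.ne q) hn
  rw [LSeries.convolution_def]
  simp only
  rw [Finset.sum_eq_single (a, b)]
  · simp only [hb, if_true]
    have := hF (ZMod.unitOfCoprime a ha) b
    rw [ZMod.coe_unitOfCoprime] at this
    rw [← this, ← hab]
    push_cast
    rfl
  · rintro ⟨a', b'⟩ hm hne
    rw [Nat.mem_divisorsAntidiagonal] at hm
    by_contra hz
    simp only [mul_eq_zero, not_or] at hz
    obtain ⟨h1, h2⟩ := hz
    have hb' : b' ∈ Nat.factoredNumbers q.primeFactors := by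
      by_contra h; simp [h] at h2
    have ha' : a'.Coprime q := by
      by_contra h
      exact h1 (χ.map_nonunit (fun hu => h ((ZMod.isUnit_iff_coprime _ _).mp hu)))
    have hd1 : a' ∣ a := (er_cop ha' hb).dvd_of_dvd_mul_right (hab ▸ hm.1 ▸ Dvd.intro _ rfl)
    have hd2 : a ∣ a' := (er_cop ha hb').dvd_of_dvd_mul_right ((show a' * b' = n from hm.1) ▸ hab ▸ Dvd.intro _ rfl)
    have haa := Nat.dvd_antisymm hd1 hd2
    subst haa
    have ha0 : 0 < a' := Nat.pos_of_ne_zero (fun h => hn (by rw [← hab, h, zero_mul]))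
    have : b' = b := Nat.eq_of_mul_eq_mul_left ha0 (hm.1.trans hab.symm)
    exact hne (by rw [this])
  · intro h
    exact absurd (Nat.mem_divisorsAntidiagonal.mpr ⟨hab, hn⟩) h

lemma er_Linv (χ : DirichletCharacter ℂ q) :
    ∃ c, Tendsto (fun s : ℝ => (LSeries (fun n => χ n) s)⁻¹) (𝓝[>] 1) (𝓝 c) := by
  have heq : ∀ᶠ s : ℝ in 𝓝[>] 1, (DirichletCharacter.LFunction χ s)⁻¹ = (LSeries (fun n => χ n) s)⁻¹ := by
    filter_upwards [self_mem_nhdsWithin] with s hs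
    rw [DirichletCharacter.LFunction_eq_LSeries χ (by simpa using hs)]
  have hc : Tendsto (fun s : ℝ => (s : ℂ)) (𝓝[>] 1) (𝓝[≠] 1) := by
    rw [tendsto_nhdsWithin_iff]
    refine ⟨?_, ?_⟩
    · have : Tendsto (fun s : ℝ => (s : ℂ)) (𝓝[>] 1) (𝓝 ((1:ℝ):ℂ)) :=
        tendsto_nhdsWithin_of_tendsto_nhds (Complex.continuous_ofReal.tendsto 1)
      simpa using this
    · filter_upwards [self_mem_nhdsWithin] with s hs
      have : s ≠ 1 := ne_of_gt hs
      simpa using this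
  by_cases hχ : χ = 1
  · subst hχ
    have h := (DirichletCharacter.LFunctionTrivChar_residue_one (N := q)).comp hc
    have hne : (∏ p ∈ q.primeFactors, (1 - (p:ℂ)⁻¹)) ≠ 0 := by
      rw [Finset.prod_ne_zero_iff]
      intro p hp
      have hp1 := (Nat.prime_of_mem_primeFactors hp).one_lt
      have hp0 : (p:ℂ) ≠ 0 := by exact_mod_cast (by omega : p ≠ 0)
      have hp2 : (p:ℂ) ≠ 1 := by exact_mod_cast (by omega : p ≠ 1)
      rw [sub_ne_zero]
      intro h
      exact hp2 (by rw [← inv_inv (p:ℂ), ← h, inv_one])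
    have h2 := h.inv₀ hne
    have h3 : Tendsto (fun s : ℝ => (s : ℂ) - 1) (𝓝[>] 1) (𝓝 (1 - 1)) :=
      (tendsto_nhdsWithin_iff.mp hc).1.sub_const 1
    refine ⟨_, (h3.mul h2).congr' ?_⟩
    filter_upwards [heq, self_mem_nhdsWithin] with s hs hs1
    rw [← hs]
    simp only [Function.comp, DirichletCharacter.LFunctionTrivChar]
    have : (s:ℂ) - 1 ≠ 0 := by
      rw [sub_ne_zero]
      have : s ≠ 1 := ne_of_gt hs1
      exact_mod_cast this
    rw [mul_inv, mul_inv_cancel_left₀ this]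
  · refine ⟨(DirichletCharacter.LFunction χ 1)⁻¹, Tendsto.congr' heq ?_⟩
    apply Tendsto.inv₀ _ (DirichletCharacter.LFunction_apply_one_ne_zero hχ)
    exact ((DirichletCharacter.differentiable_LFunction hχ).continuous.tendsto 1).comp
      (tendsto_nhdsWithin_iff.mp hc).1

end
end

section
section
variable {q : ℕ} [NeZero q]

noncomputable def erF (χ : DirichletCharacter ℂ q) (Φ : ZMod q → ℤ) (x : ZMod q) : ℂ :=
  ∑ h : (ZMod q)ˣ, χ⁻¹ h * (Φ (h * x) : ℂ)

lemma erF_mul (χ : DirichletCharacter ℂ q) (Φ : ZMod q → ℤ) (k : (ZMod q)ˣ) (x : ZMod q) :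
    erF χ Φ (k * x) = χ k * erF χ Φ x := by
  unfold erF
  rw [Finset.mul_sum, ← Equiv.sum_comp (Equiv.mulRight k) (fun h : (ZMod q)ˣ => χ k * (χ⁻¹ h * (Φ (h * x) : ℂ)))]
  apply Finset.sum_congr rfl
  intro h _
  simp only [Equiv.coe_mulRight, Units.val_mul, map_mul]
  have : χ k * χ⁻¹ k = 1 := by
    rw [← MulChar.mul_apply, mul_inv_cancel, MulChar.one_apply_coe]
  rw [← mul_assoc (h : ZMod q)]
  linear_combination (-(χ⁻¹ h) * (Φ (h * k * x) : ℂ)) * this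

lemma erF_sum (Φ : ZMod q → ℤ) (x : ZMod q) :
    ∑ χ : DirichletCharacter ℂ q, erF χ Φ x = q.totient * Φ x := by
  unfold erF
  rw [Finset.sum_comm]
  have : ∀ h : (ZMod q)ˣ, ∑ χ : DirichletCharacter ℂ q, χ⁻¹ h * (Φ (h * x) : ℂ) =
      if h = 1 then q.totient * (Φ x : ℂ) else 0 := by
    intro h
    have he : ∑ χ : DirichletCharacter ℂ q, χ⁻¹ (h : ZMod q) = ∑ χ : DirichletCharacter ℂ q, χ (h : ZMod q) :=
      Equiv.sum_comp (Equiv.inv (DirichletCharacter ℂ q)) (fun χ => χ (h : ZMod q))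
    rw [← Finset.sum_mul, he, DirichletCharacter.sum_characters_eq ℂ (h : ZMod q)]
    by_cases hh : h = 1
    · simp [hh]
    · simp [hh]
  rw [Finset.sum_congr rfl (fun h _ => this h)]
  simp

lemma erF_tendsto (χ : DirichletCharacter ℂ q) (Φ : ZMod q → ℤ)
    (h : Tendsto (fun N => ∑ n ∈ range N, (Φ n : ℂ) / n) atTop (𝓝 0)) :
    Tendsto (fun N => ∑ n ∈ range N, erF χ Φ n / n) atTop (𝓝 0) := by
  have h1 : Tendsto (fun N => ∑ u : (ZMod q)ˣ, χ⁻¹ u * ∑ n ∈ range N, (Φ (u * n) : ℂ) / n) atTop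
      (𝓝 (∑ u : (ZMod q)ˣ, χ⁻¹ u * 0)) :=
    tendsto_finsetSum _ fun u _ => (er_conj Φ h u).const_mul _
  simp only [mul_zero, Finset.sum_const_zero] at h1
  refine h1.congr fun N => ?_
  simp only [Finset.mul_sum]
  rw [Finset.sum_comm]
  apply Finset.sum_congr rfl
  intro n _
  unfold erF
  rw [Finset.sum_div]
  apply Finset.sum_congr rfl
  intro u _
  ring

open Classical in
lemma er_summable_ind (G : ZMod q → ℂ) {s : ℝ} (hs : 1 < s) :
    LSeriesSummable (fun n => if n ∈ Nat.factoredNumbers q.primeFactors then G n else 0) s := by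
  have h := ZMod.LSeriesSummable_of_one_lt_re G (s := (s:ℂ)) (by simpa using hs)
  refine Summable.of_norm_bounded h.norm fun n => ?_
  apply LSeries.norm_term_le
  split_ifs <;> simp

open Classical in
lemma er_A_tendsto (χ : DirichletCharacter ℂ q) (Φ : ZMod q → ℤ)
    (h : Tendsto (fun N => ∑ n ∈ range N, (Φ n : ℂ) / n) atTop (𝓝 0)) :
    Tendsto (fun s : ℝ => LSeries (fun n => if n ∈ Nat.factoredNumbers q.primeFactors then erF χ Φ n else 0) s)
      (𝓝[>] 1) (𝓝 0) := by
  obtain ⟨c, hc⟩ := er_Linv χ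
  have h1 := hc.mul (er_dir _ (erF_tendsto χ Φ h))
  rw [mul_zero] at h1
  refine h1.congr' ?_
  filter_upwards [self_mem_nhdsWithin] with s hs
  have hs1 : 1 < ((s:ℂ)).re := by simpa using hs
  have h2 : LSeries (fun n => erF χ Φ n) s = LSeries (fun n => χ n) s *
      LSeries (fun n => if n ∈ Nat.factoredNumbers q.primeFactors then erF χ Φ n else 0) s := by
    rw [← LSeries_convolution' (ZMod.LSeriesSummable_of_one_lt_re χ hs1) (er_summable_ind _ hs)]
    apply LSeries_congr
    intro n hn
    exact (er_convol χ (erF χ Φ) (erF_mul χ Φ) hn).symm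
  rw [h2, inv_mul_cancel_left₀]
  rw [← DirichletCharacter.LFunction_eq_LSeries χ hs1]
  exact DirichletCharacter.LFunction_ne_zero_of_one_le_re χ (Or.inr (by intro h; simp [h] at hs1)) hs1.le

open Classical in
lemma er_B_tendsto (Φ : ZMod q → ℤ)
    (h : Tendsto (fun N => ∑ n ∈ range N, (Φ n : ℂ) / n) atTop (𝓝 0)) :
    Tendsto (fun s : ℝ => LSeries (fun n => if n ∈ Nat.factoredNumbers q.primeFactors then (Φ n : ℂ) else 0) s)
      (𝓝[>] 1) (𝓝 0) := by
  have h1 : Tendsto (fun s : ℝ => (q.totient : ℂ)⁻¹ * ∑ χ : DirichletCharacter ℂ q, 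
      LSeries (fun n => if n ∈ Nat.factoredNumbers q.primeFactors then erF χ Φ n else 0) s) (𝓝[>] 1)
      (𝓝 ((q.totient : ℂ)⁻¹ * ∑ χ : DirichletCharacter ℂ q, 0)) :=
    (tendsto_finsetSum _ fun χ _ => er_A_tendsto χ Φ h).const_mul _
  simp only [mul_zero, Finset.sum_const_zero] at h1
  refine h1.congr' ?_
  filter_upwards [self_mem_nhdsWithin] with s hs
  have ht : (q.totient : ℂ) ≠ 0 := by
    exact_mod_cast (Nat.totient_pos.mpr (NeZero.pos q)).ne'
  rw [← LSeries_sum (fun χ _ => er_summable_ind _ hs), inv_mul_eq_iff_eq_mul₀ ht, ← LSeries_smul]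
  apply LSeries_congr
  intro n hn
  simp only [Finset.sum_apply, Pi.smul_apply, smul_eq_mul]
  split_ifs
  · exact erF_sum Φ n
  · simp

open Classical in
theorem er_main (Φ : ZMod q → ℤ)
    (h : Tendsto (fun N => ∑ n ∈ range N, (Φ n : ℂ) / n) atTop (𝓝 0))
    (h1 : Φ 1 = 1 ∨ Φ 1 = -1) (hb : ∀ a, |Φ a| ≤ 1) :
    2 ≤ ∏ p ∈ q.primeFactors, (1 - (p:ℝ)⁻¹)⁻¹ := by
  let f : ℕ →* ℝ := { toFun := fun n => (n:ℝ)⁻¹, map_one' := by simp, map_mul' := by intro a b; push_cast; rw [mul_inv] }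
  have hP := (EulerProduct.summable_and_hasSum_factoredNumbers_prod_filter_prime_geometric (f := f) (by
    intro p hp
    have : (1:ℝ) < p := by exact_mod_cast hp.one_lt
    simp only [f, MonoidHom.coe_mk, OneHom.coe_mk, norm_inv, Real.norm_natCast]
    exact inv_lt_one_of_one_lt₀ this) q.primeFactors).2
  rw [Finset.filter_true_of_mem (fun p hp => Nat.prime_of_mem_primeFactors hp)] at hP
  set P := ∏ p ∈ q.primeFactors, (1 - (p:ℝ)⁻¹)⁻¹ with hPd
  have hP2 : HasSum ((Nat.factoredNumbers q.primeFactors).indicator (fun n : ℕ => (n:ℝ)⁻¹)) P :=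
    (hasSum_subtype_iff_indicator (f := fun n : ℕ => (n:ℝ)⁻¹)).mp hP
  have hP3 := hP2.sub (hasSum_ite_eq (1:ℕ) (1:ℝ))
  have hkey : ∀ s : ℝ, 1 < s → 2 - P ≤ ‖LSeries (fun n => if n ∈ Nat.factoredNumbers q.primeFactors then (Φ n : ℂ) else 0) s‖ := by
    intro s hs
    have hsum := er_summable_ind (fun a : ZMod q => (Φ a : ℂ)) hs
    set t := LSeries.term (fun n => if n ∈ Nat.factoredNumbers q.primeFactors then (Φ n : ℂ) else 0) s with htd
    have e1 : LSeries (fun n => if n ∈ Nat.factoredNumbers q.primeFactors then (Φ n : ℂ) else 0) s = 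
      t 1 + ∑' n, (if n = 1 then 0 else t n) := Summable.tsum_eq_add_tsum_ite hsum 1
    have ht1 : ‖t 1‖ = 1 := by
      rw [htd, LSeries.term_of_ne_zero one_ne_zero]
      simp only [er_one_mem, if_true, Nat.cast_one, Complex.one_cpow, div_one]
      rcases h1 with h | h <;> simp [h]
    have ht2 : ‖∑' n, (if n = 1 then 0 else t n)‖ ≤ P - 1 := by
      apply tsum_of_norm_bounded hP3
      intro n
      by_cases hn1 : n = 1
      · subst hn1
        simp [er_one_mem]
      · simp only [hn1, if_false, sub_zero]
        by_cases hn0 : n = 0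
        · subst hn0
          simp only [htd, LSeries.term_zero, norm_zero]
          exact Set.indicator_nonneg (fun _ _ => by positivity) _
        rw [htd, LSeries.term_of_ne_zero hn0]
        by_cases hm : n ∈ Nat.factoredNumbers q.primeFactors
        · rw [Set.indicator_of_mem hm]
          simp only [hm, if_true]
          rw [norm_div, Complex.norm_natCast_cpow_of_pos (Nat.pos_of_ne_zero hn0), Complex.ofReal_re,
            div_eq_mul_inv]
          have hn1' : (1:ℝ) ≤ n := by exact_mod_cast Nat.pos_of_ne_zero hn0
          have h3 : (n:ℝ) ≤ (n:ℝ) ^ s := Real.self_le_rpow_of_one_le hn1' hs.le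
          have h4 : ‖(Φ n : ℂ)‖ ≤ 1 := by
            rw [Complex.norm_intCast]
            exact_mod_cast hb n
          have h5 : ((n:ℝ) ^ s)⁻¹ ≤ (n:ℝ)⁻¹ := inv_anti₀ (by linarith) h3
          calc _ ≤ 1 * (n:ℝ)⁻¹ := by gcongr
            _ = _ := one_mul _
        · rw [Set.indicator_of_notMem hm]
          simp [hm]
    rw [e1]
    have := norm_sub_le_norm_add (t 1) (∑' n, (if n = 1 then 0 else t n))
    linarith
  have hlim := (er_B_tendsto Φ h).norm
  rw [norm_zero] at hlim
  have := ge_of_tendsto hlim (by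
    filter_upwards [self_mem_nhdsWithin] with s hs
    exact hkey s hs)
  linarith

end

theorem er_false {q : ℕ} (hq : 1 < q) (f : ℕ → ℤ) (hper : ∀ n ≥ 1, f (n + q) = f n)
    (hpm : ∀ n ≥ 1, ¬ q ∣ n → f n = 1 ∨ f n = -1) (h0 : ∀ n ≥ 1, q ∣ n → f n = 0)
    (hlim : Tendsto (fun N => ∑ n ∈ Finset.Icc 1 N, (f n : ℝ) / n) atTop (𝓝 0)) :
    2 ≤ ∏ p ∈ q.primeFactors, (1 - (p:ℝ)⁻¹)⁻¹ := by
  have : NeZero q := ⟨by omega⟩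
  have hmod : ∀ k n, 1 ≤ n → f (n + k * q) = f n := by
    intro k n hn
    induction k with
    | zero => simp
    | succ k ih =>
      rw [show n + (k + 1) * q = (n + k * q) + q by ring, hper _ (by omega), ih]
  set Φ : ZMod q → ℤ := fun a => f (a.val + q) with hΦ
  have hΦn : ∀ n : ℕ, 1 ≤ n → Φ n = f n := by
    intro n hn
    simp only [hΦ, ZMod.val_natCast]
    rw [← hper n hn, ← hmod (n / q) (n % q + q) (by omega)]
    congr 1
    have := Nat.mod_add_div n q
    nlinarith
  apply er_main Φ
  · have h2 : Tendsto (fun N => ((∑ n ∈ Finset.Icc 1 N, (f n : ℝ) / n : ℝ) : ℂ)) atTop (𝓝 ((0:ℝ):ℂ)) :=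
      (Complex.continuous_ofReal.tendsto 0).comp hlim
    rw [Complex.ofReal_zero] at h2
    rw [← tendsto_add_atTop_iff_nat 1]
    refine h2.congr fun N => ?_
    rw [Finset.range_eq_Ico, Finset.sum_eq_sum_Ico_succ_bot (by omega)]
    simp only [Nat.cast_zero, div_zero, zero_add]
    push_cast
    apply Finset.sum_congr rfl
    intro n hn
    rw [hΦn n (Finset.mem_Icc.mp hn).1]
  · have := hΦn 1 le_rfl
    rw [Nat.cast_one] at this
    rw [this]
    exact hpm 1 le_rfl (by intro h; have := Nat.le_of_dvd one_pos h; omega)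
  · intro a
    simp only [hΦ]
    by_cases hd : q ∣ a.val + q
    · rw [h0 _ (by omega) hd]; simp
    · rcases hpm _ (by omega) hd with h | h <;> rw [h] <;> simp
end

section
noncomputable def erh (q : ℕ) : ℝ := ∑ p ∈ q.primeFactors.filter (fun p => 7 ≤ p), 1 / ((p:ℝ) - 1)

lemma erh_nonneg (q : ℕ) : 0 ≤ erh q := by
  apply Finset.sum_nonneg
  intro p hp
  have h7 : (7:ℝ) ≤ p := by exact_mod_cast (Finset.mem_filter.mp hp).2
  apply div_nonneg <;> linarith

lemma er_prod_le (q : ℕ) : ∏ p ∈ q.primeFactors.filter (fun p => 7 ≤ p), (1 - (p:ℝ)⁻¹)⁻¹ ≤ Real.exp (erh q) := by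
  unfold erh
  rw [Real.exp_sum]
  apply Finset.prod_le_prod
  · intro p hp
    have h7 : (7:ℝ) ≤ p := by exact_mod_cast (Finset.mem_filter.mp hp).2
    have : (p:ℝ)⁻¹ ≤ 1 := inv_le_one_of_one_le₀ (by linarith)
    exact inv_nonneg.mpr (by linarith)
  · intro p hp
    have h7 : (7:ℝ) ≤ p := by exact_mod_cast (Finset.mem_filter.mp hp).2
    have h1 : (1 - (p:ℝ)⁻¹)⁻¹ = 1 / ((p:ℝ) - 1) + 1 := by
      have a1 : (p:ℝ) ≠ 0 := by linarith
      have a2 : (p:ℝ) - 1 ≠ 0 := by linarith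
      rw [show 1 - (p:ℝ)⁻¹ = ((p:ℝ) - 1) / p by field_simp, inv_div]
      field_simp
      ring
    rw [h1]
    exact Real.add_one_le_exp _

lemma er_small_prod {q : ℕ} (c : ℝ) (hc : 0 ≤ c) 
    (h2 : 2 ≤ ∏ p ∈ q.primeFactors, (1 - (p:ℝ)⁻¹)⁻¹)
    (hs : ∏ p ∈ q.primeFactors.filter (fun p => ¬ 7 ≤ p), (1 - (p:ℝ)⁻¹)⁻¹ ≤ c) :
    2 ≤ c * Real.exp (erh q) := by
  rw [← Finset.prod_filter_mul_prod_filter_not _ (fun p => 7 ≤ p)] at h2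
  have h3 := er_prod_le q
  have h4 : 0 ≤ ∏ p ∈ q.primeFactors.filter (fun p => 7 ≤ p), (1 - (p:ℝ)⁻¹)⁻¹ := by
    apply Finset.prod_nonneg
    intro p hp
    have h7 : (7:ℝ) ≤ p := by exact_mod_cast (Finset.mem_filter.mp hp).2
    have : (p:ℝ)⁻¹ ≤ 1 := inv_le_one_of_one_le₀ (by linarith)
    exact inv_nonneg.mpr (by linarith)
  calc 2 ≤ _ := h2
    _ ≤ Real.exp (erh q) * c := by
      apply (mul_le_mul_of_nonneg_left hs h4).trans
      exact mul_le_mul_of_nonneg_right h3 hc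
    _ = _ := mul_comm _ _

lemma er_filter_small {q a b : ℕ} (hq0 : q ≠ 0) (hq : q % 2 = 1) (hab : (a = 3 ∧ b = 5) ∨ (a = 5 ∧ b = 3))
    (hb : ¬ b ∣ q) :
    q.primeFactors.filter (fun p => ¬ 7 ≤ p) = ({a} : Finset ℕ).filter (fun p => p ∣ q) := by
  ext p
  simp only [Finset.mem_filter, Nat.mem_primeFactors, Finset.mem_singleton, not_le]
  constructor
  · rintro ⟨⟨hp, hd, -⟩, h7⟩
    refine ⟨?_, hd⟩
    have h2 : p ≠ 2 := by rintro rfl; omega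
    have h0 := hp.two_le
    have hb' : p ≠ b := by rintro rfl; exact hb hd
    interval_cases p
    · omega
    · omega
    · exact absurd hp (by norm_num)
    · omega
    · exact absurd hp (by norm_num)
  · rintro ⟨rfl, hd⟩
    rcases hab with ⟨rfl, -⟩ | ⟨rfl, -⟩ <;> exact ⟨⟨by norm_num, hd, hq0⟩, by norm_num⟩

lemma er_case1 {q : ℕ} (hq : q % 4 = 1) (h3 : q % 3 ≠ 0)
    (h2 : 2 ≤ ∏ p ∈ q.primeFactors, (1 - (p:ℝ)⁻¹)⁻¹) : 0.46 ≤ erh q := by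
  have h := er_small_prod (5/4) (by norm_num) h2 (by
    rw [er_filter_small (a := 5) (b := 3) (by omega) (by omega) (Or.inr ⟨rfl, rfl⟩) (by omega),
      Finset.prod_filter, Finset.prod_singleton]
    split_ifs <;> norm_num)
  by_contra hc
  push Not at hc
  have h1 : Real.exp (erh q) ≤ Real.exp 0.46 := Real.exp_le_exp.mpr hc.le
  have h5 : Real.exp 0.46 < 1.6 := by
    have := Real.exp_bound' (x := 0.46) (by norm_num) (by norm_num) (n := 5) (by norm_num)
    refine lt_of_le_of_lt this ?_
    norm_num [Finset.sum_range_succ, Nat.factorial]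
  linarith

lemma er_case2 {q : ℕ} (hq : q % 4 = 1) (h5 : q % 5 ≠ 0)
    (h2 : 2 ≤ ∏ p ∈ q.primeFactors, (1 - (p:ℝ)⁻¹)⁻¹) : 0.285 ≤ erh q := by
  have h := er_small_prod (3/2) (by norm_num) h2 (by
    rw [er_filter_small (a := 3) (b := 5) (by omega) (by omega) (Or.inl ⟨rfl, rfl⟩) (by omega),
      Finset.prod_filter, Finset.prod_singleton]
    split_ifs <;> norm_num)
  by_contra hc
  push Not at hc
  have h1 : Real.exp (erh q) ≤ Real.exp 0.285 := Real.exp_le_exp.mpr hc.le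
  have h5 : Real.exp 0.285 < 4/3 := by
    have := Real.exp_bound' (x := 0.285) (by norm_num) (by norm_num) (n := 5) (by norm_num)
    refine lt_of_le_of_lt this ?_
    norm_num [Finset.sum_range_succ, Nat.factorial]
  linarith

lemma er_card_cong (S : Finset ℕ) (X d : ℕ) (hX : ∀ q ∈ S, q ≤ X)
    (hc : ∀ a ∈ S, ∀ b ∈ S, a % d = b % d) : (S.card : ℝ) ≤ (X : ℝ) / d + 1 := by
  have h1 : S.card ≤ (range (X / d + 1)).card := by
    apply Finset.card_le_card_of_injOn (fun q => q / d)
    · intro q hq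
      have := Nat.div_le_div_right (c := d) (hX q hq)
      simp only [Finset.coe_range, Set.mem_Iio]
      omega
    · intro a ha b hb hab
      have h := hc a ha b hb
      simp only at hab
      rw [← Nat.mod_add_div a d, ← Nat.mod_add_div b d, h, hab]
  rw [card_range] at h1
  calc (S.card : ℝ) ≤ ((X / d + 1 : ℕ) : ℝ) := by exact_mod_cast h1
    _ ≤ _ := by push_cast; gcongr; exact Nat.cast_div_le

lemma er_E (k : ℕ) : ∑ p ∈ (range (47 + 2 * k)).filter (fun p => p.Prime ∧ 7 ≤ p), 1 / ((p:ℝ) * (p - 1)) ≤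
    0.0532 + 1 / 91 - 1 / (91 + 4 * (k:ℝ)) := by
  induction k with
  | zero =>
    simp only [mul_zero, add_zero, Finset.sum_filter, Finset.sum_range_succ, Finset.sum_range_zero]
    norm_num
  | succ k ih =>
    rw [show 47 + 2 * (k + 1) = (47 + 2 * k) + 1 + 1 by ring]
    rw [Finset.sum_filter, Finset.sum_range_succ, Finset.sum_range_succ, ← Finset.sum_filter]
    have h1 : ¬ Nat.Prime (47 + 2 * k + 1) := by
      intro h
      have := h.eq_one_or_self_of_dvd 2 (by omega)
      omega
    rw [if_neg (show ¬ (Nat.Prime (47 + 2 * k + 1) ∧ 7 ≤ 47 + 2 * k + 1) from fun h => h1 h.1), add_zero]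
    have hk : (0:ℝ) ≤ k := Nat.cast_nonneg k
    have h2 : (if Nat.Prime (47 + 2 * k) ∧ 7 ≤ 47 + 2 * k then 1 / (((47 + 2 * k : ℕ):ℝ) * (((47 + 2 * k : ℕ):ℝ) - 1)) else 0)
        ≤ 1 / (91 + 4 * (k:ℝ)) - 1 / (91 + 4 * ((k + 1 : ℕ) :ℝ)) := by
      have h3 : 1 / (((47 + 2 * k : ℕ):ℝ) * (((47 + 2 * k : ℕ):ℝ) - 1)) ≤ 1 / (91 + 4 * (k:ℝ)) - 1 / (91 + 4 * ((k + 1 : ℕ) :ℝ)) := by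
        push_cast
        rw [div_sub_div _ _ (by positivity) (by positivity), div_le_div_iff₀ (by nlinarith) (by positivity)]
        nlinarith
      have h4 : 0 ≤ 1 / (((47 + 2 * k : ℕ):ℝ) * (((47 + 2 * k : ℕ):ℝ) - 1)) := by
        push_cast
        apply div_nonneg zero_le_one
        nlinarith
      split_ifs <;> linarith
    linarith

lemma er_E' (N : ℕ) : ∑ p ∈ (range N).filter (fun p => p.Prime ∧ 7 ≤ p), 1 / ((p:ℝ) * (p - 1)) ≤ 0.0642 := by
  have h1 := er_E N
  have h2 : ∑ p ∈ (range N).filter (fun p => p.Prime ∧ 7 ≤ p), 1 / ((p:ℝ) * (p - 1)) ≤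
      ∑ p ∈ (range (47 + 2 * N)).filter (fun p => p.Prime ∧ 7 ≤ p), 1 / ((p:ℝ) * (p - 1)) := by
    apply Finset.sum_le_sum_of_subset_of_nonneg
    · apply Finset.filter_subset_filter
      exact Finset.range_subset_range.mpr (by omega)
    · intro p hp _
      have h7 : (7:ℝ) ≤ p := by exact_mod_cast (Finset.mem_filter.mp hp).2.2
      apply div_nonneg zero_le_one
      nlinarith
  have h3 : 0 ≤ 1 / (91 + 4 * (N:ℝ)) := by positivity
  have h4 : (0.0532:ℝ) + 1 / 91 ≤ 0.0642 := by norm_num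
  linarith

lemma er_markov (r X : ℕ) : ∑ q ∈ (Icc 1 X).filter (fun q => q % 60 = r), erh q ≤
    X / 60 * 0.0642 + 2 * ∑ k ∈ range X, 1 / ((k:ℝ) + 1) := by
  have h1 : ∀ q ∈ (Icc 1 X).filter (fun q => q % 60 = r), erh q =
      ∑ p ∈ (range (X + 1)).filter (fun p => p.Prime ∧ 7 ≤ p), if p ∣ q then 1 / ((p:ℝ) - 1) else 0 := by
    intro q hq
    simp only [Finset.mem_filter, Finset.mem_Icc] at hq
    unfold erh
    rw [← Finset.sum_filter]
    apply Finset.sum_congr _ (fun _ _ => rfl)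
    ext p
    simp only [Finset.mem_filter, Nat.mem_primeFactors, Finset.mem_range]
    constructor
    · rintro ⟨⟨hp, hd, h0⟩, h7⟩
      exact ⟨⟨by have := Nat.le_of_dvd (by omega) hd; omega, hp, h7⟩, hd⟩
    · rintro ⟨⟨_, hp, h7⟩, hd⟩
      exact ⟨⟨hp, hd, by omega⟩, h7⟩
  rw [Finset.sum_congr rfl h1, Finset.sum_comm]
  have h2 : ∀ p ∈ (range (X + 1)).filter (fun p => p.Prime ∧ 7 ≤ p),
      ∑ q ∈ (Icc 1 X).filter (fun q => q % 60 = r), (if p ∣ q then 1 / ((p:ℝ) - 1) else 0) ≤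
      X / 60 * (1 / ((p:ℝ) * (p - 1))) + 1 / ((p:ℝ) - 1) := by
    intro p hp
    simp only [Finset.mem_filter] at hp
    obtain ⟨_, hp, h7⟩ := hp
    have h7' : (7:ℝ) ≤ p := by exact_mod_cast h7
    rw [← Finset.sum_filter, Finset.sum_const, nsmul_eq_mul]
    have hc := er_card_cong (((Icc 1 X).filter (fun q => q % 60 = r)).filter (fun q => p ∣ q)) X (p * 60)
      (by
        intro q hq
        simp only [Finset.mem_filter, Finset.mem_Icc] at hq
        exact hq.1.1.2) (by
        intro a ha b hb
        simp only [Finset.mem_filter, Finset.mem_Icc] at ha hb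
        have hcop : Nat.Coprime p 60 := by
          rw [Nat.Prime.coprime_iff_not_dvd hp]
          intro hd
          have : p ∈ (60:ℕ).primeFactors := Nat.mem_primeFactors.mpr ⟨hp, hd, by norm_num⟩
          have h60 : p ∣ 2 ^ 2 * (3 * 5) := by simpa using hd
          rcases hp.dvd_mul.mp h60 with h | h
          · have := Nat.le_of_dvd (by norm_num) (hp.dvd_of_dvd_pow h)
            omega
          · rcases hp.dvd_mul.mp h with h | h
            · have := Nat.le_of_dvd (by norm_num) h
              omega
            · have := Nat.le_of_dvd (by norm_num) h
              omega
        refine (Nat.modEq_and_modEq_iff_modEq_mul hcop).mp ⟨?_, ?_⟩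
        · exact (Nat.mod_eq_zero_of_dvd ha.2).trans (Nat.mod_eq_zero_of_dvd hb.2).symm
        · exact ha.1.2.trans hb.1.2.symm)
    have hpos : 0 ≤ 1 / ((p:ℝ) - 1) := by apply div_nonneg <;> linarith
    refine (mul_le_mul_of_nonneg_right hc hpos).trans (le_of_eq ?_)
    have a1 : (p:ℝ) ≠ 0 := by linarith
    have a2 : (p:ℝ) - 1 ≠ 0 := by linarith
    push_cast
    field_simp
  refine (Finset.sum_le_sum h2).trans ?_
  rw [Finset.sum_add_distrib, ← Finset.mul_sum]
  apply add_le_add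
  · exact mul_le_mul_of_nonneg_left (er_E' _) (by positivity)
  · rw [Finset.sum_filter, Finset.sum_range_succ', Finset.mul_sum]
    simp only [Nat.not_prime_zero, false_and, if_false, add_zero]
    apply Finset.sum_le_sum
    intro k _
    split_ifs with hk
    · have h7' : (7:ℝ) ≤ ((k + 1 : ℕ):ℝ) := by exact_mod_cast hk.2
      push_cast at h7' ⊢
      rw [mul_one_div, div_le_div_iff₀ (by linarith) (by linarith)]
      linarith
    · positivity
end

section
open Classical in
lemma er_bad_count (B : ℕ → Prop)
    (hB : ∀ q, 1 < q → B q → 2 ≤ ∏ p ∈ q.primeFactors, (1 - (p:ℝ)⁻¹)⁻¹) (X : ℕ) :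
    (((Icc 1 X).filter (fun q => q % 4 = 1 ∧ B q)).card : ℝ) ≤
      0.05495 * X + 2 + 80 * ∑ k ∈ range X, 1 / ((k:ℝ) + 1) := by
  set H := ∑ k ∈ range X, 1 / ((k:ℝ) + 1) with hH
  have hH0 : 0 ≤ H := Finset.sum_nonneg fun k _ => by positivity
  set R1 := (range 60).filter (fun r => r % 4 = 1 ∧ r % 3 ≠ 0) with hR1
  set R2 := (range 60).filter (fun r => r % 4 = 1 ∧ r % 3 = 0 ∧ r % 5 ≠ 0) with hR2
  have c1 : R1.card = 10 := by decide +kernel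
  have c2 : R2.card = 4 := by decide +kernel
  have hsub : (Icc 1 X).filter (fun q => q % 4 = 1 ∧ B q) ⊆
      (({1} : Finset ℕ) ∪ (Icc 1 X).filter (fun q => q % 60 = 45)) ∪
      (((Icc 1 X).filter (fun q => q % 60 ∈ R1 ∧ 0.46 ≤ erh q)) ∪
       ((Icc 1 X).filter (fun q => q % 60 ∈ R2 ∧ 0.285 ≤ erh q))) := by
    intro q hq
    rw [Finset.mem_filter] at hq
    obtain ⟨hqX, hq4, hqB⟩ := hq
    simp only [Finset.mem_union, Finset.mem_singleton, Finset.mem_filter, hqX, true_and, hR1, hR2, Finset.mem_range]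
    by_cases h1 : q = 1
    · exact Or.inl (Or.inl h1)
    have hq1 : 1 < q := by
      have := (Finset.mem_Icc.mp hqX).1
      omega
    have h2 := hB q hq1 hqB
    by_cases h3 : q % 3 = 0
    · by_cases h5 : q % 5 = 0
      · left; right; omega
      · right; right
        exact ⟨by omega, er_case2 hq4 h5 h2⟩
    · right; left
      exact ⟨by omega, er_case1 hq4 h3 h2⟩
  have hcard := (Finset.card_le_card hsub).trans ((Finset.card_union_le _ _).trans
    (add_le_add (Finset.card_union_le _ _) (Finset.card_union_le _ _)))
  have hm : ∀ (R : Finset ℕ) (c : ℝ), 0 < c → 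
      (((Icc 1 X).filter (fun q => q % 60 ∈ R ∧ c ≤ erh q)).card : ℝ) ≤ R.card * (X / 60 * 0.0642 + 2 * H) / c := by
    intro R c hc
    rw [le_div_iff₀ hc]
    calc (((Icc 1 X).filter (fun q => q % 60 ∈ R ∧ c ≤ erh q)).card : ℝ) * c
        = ∑ q ∈ (Icc 1 X).filter (fun q => q % 60 ∈ R ∧ c ≤ erh q), c := by
          rw [Finset.sum_const, nsmul_eq_mul]
      _ ≤ ∑ q ∈ (Icc 1 X).filter (fun q => q % 60 ∈ R ∧ c ≤ erh q), erh q := 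
          Finset.sum_le_sum fun q hq => (Finset.mem_filter.mp hq).2.2
      _ ≤ ∑ q ∈ (Icc 1 X).filter (fun q => q % 60 ∈ R), erh q := by
          apply Finset.sum_le_sum_of_subset_of_nonneg
          · intro q hq
            rw [Finset.mem_filter] at hq ⊢
            exact ⟨hq.1, hq.2.1⟩
          · intro q _ _
            exact erh_nonneg q
      _ = ∑ r ∈ R, ∑ q ∈ ((Icc 1 X).filter (fun q => q % 60 ∈ R)).filter (fun q => q % 60 = r), erh q :=
          (Finset.sum_fiberwise_of_maps_to (fun q hq => (Finset.mem_filter.mp hq).2) _).symm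
      _ ≤ ∑ r ∈ R, (X / 60 * 0.0642 + 2 * H) := by
          apply Finset.sum_le_sum
          intro r _
          refine le_trans ?_ (er_markov r X)
          apply Finset.sum_le_sum_of_subset_of_nonneg
          · intro q hq
            simp only [Finset.mem_filter] at hq ⊢
            exact ⟨hq.1.1, hq.2⟩
          · intro q _ _
            exact erh_nonneg q
      _ = _ := by rw [Finset.sum_const, nsmul_eq_mul]
  have h1 := hm R1 0.46 (by norm_num)
  have h2 := hm R2 0.285 (by norm_num)
  rw [c1] at h1
  rw [c2] at h2
  have h3 := er_card_cong ((Icc 1 X).filter (fun q => q % 60 = 45)) X 60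
    (fun q hq => (Finset.mem_Icc.mp (Finset.mem_filter.mp hq).1).2)
    (fun a ha b hb => (Finset.mem_filter.mp ha).2.trans (Finset.mem_filter.mp hb).2.symm)
  have hcard' : (((Icc 1 X).filter (fun q => q % 4 = 1 ∧ B q)).card : ℝ) ≤
      (1 + (((Icc 1 X).filter (fun q => q % 60 = 45)).card : ℝ)) + 
      ((((Icc 1 X).filter (fun q => q % 60 ∈ R1 ∧ 0.46 ≤ erh q)).card : ℝ) +
      (((Icc 1 X).filter (fun q => q % 60 ∈ R2 ∧ 0.285 ≤ erh q)).card : ℝ)) := by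
    rw [Finset.card_singleton] at hcard
    exact_mod_cast hcard
  have hX : (0:ℝ) ≤ X := Nat.cast_nonneg X
  norm_num at h1 h2 h3 hcard' ⊢
  linarith

lemma er_count4 (X : ℕ) : (X:ℝ) / 4 ≤ ((Icc 1 X).filter (fun q => q % 4 = 1)).card := by
  have h1 : (range ((X + 3) / 4)).card ≤ ((Icc 1 X).filter (fun q => q % 4 = 1)).card := by
    apply Finset.card_le_card_of_injOn (fun k => 4 * k + 1)
    · intro k hk
      simp only [Finset.coe_range, Set.mem_Iio, Finset.coe_filter, Finset.mem_Icc, Set.mem_setOf_eq] at hk ⊢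
      omega
    · intro a _ b _ h
      simp only at h
      omega
  rw [card_range] at h1
  have h2 : X ≤ 4 * ((X + 3) / 4) := by omega
  have h3 : (X:ℝ) ≤ 4 * ((((X + 3) / 4 : ℕ)) : ℝ) := by exact_mod_cast h2
  have h4 : ((((X + 3) / 4 : ℕ)) : ℝ) ≤ ((Icc 1 X).filter (fun q => q % 4 = 1)).card := by exact_mod_cast h1
  linarith

open Classical in
theorem er_density (B : ℕ → Prop)
    (hB : ∀ q, 1 < q → ¬ B q → 2 ≤ ∏ p ∈ q.primeFactors, (1 - (p:ℝ)⁻¹)⁻¹) :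
    0.78 ≤ atTop.liminf (fun X : ℕ => (((Icc 1 X).filter (fun q => q % 4 = 1 ∧ B q)).card : ℝ) / ((X:ℝ) / 4)) := by
  apply le_liminf_of_le
  · apply IsBoundedUnder.isCoboundedUnder_ge
    refine isBoundedUnder_of ⟨4, fun X => ?_⟩
    have h1 : ((Icc 1 X).filter (fun q => q % 4 = 1 ∧ B q)).card ≤ X := by
      refine (Finset.card_filter_le _ _).trans ?_
      simp
    have h2 : (((Icc 1 X).filter (fun q => q % 4 = 1 ∧ B q)).card : ℝ) ≤ X := by exact_mod_cast h1
    rcases Nat.eq_zero_or_pos X with rfl | hX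
    · simp
    · have : (0:ℝ) < X := by exact_mod_cast hX
      rw [div_le_iff₀ (by positivity)]
      linarith
  · have hces := (tendsto_one_div_add_atTop_nhds_zero_nat (𝕜 := ℝ)).cesaro
    have h2 : Tendsto (fun n : ℕ => 2 * (1 / (n:ℝ))) atTop (𝓝 (2 * 0)) :=
      tendsto_one_div_atTop_nhds_zero_nat.const_mul 2
    have h3 := h2.add (hces.const_mul 80)
    have h4 := h3.eventually_lt_const (show 2 * 0 + 80 * 0 < (0.00005:ℝ) by norm_num)
    filter_upwards [h4, eventually_gt_atTop 0] with X hX hX0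
    have hXp : (0:ℝ) < X := by exact_mod_cast hX0
    have hb : (((Icc 1 X).filter (fun q => q % 4 = 1 ∧ ¬ B q)).card : ℝ) ≤
        0.05495 * X + 2 + 80 * ∑ k ∈ range X, 1 / ((k:ℝ) + 1) := by
      convert er_bad_count (fun q => ¬ B q) hB X
    have hc := er_count4 X
    have hsplit := Finset.card_filter_add_card_filter_not (s := (Icc 1 X).filter (fun q => q % 4 = 1)) (fun q => B q)
    rw [Finset.filter_filter, Finset.filter_filter] at hsplit
    have hsplit' : (((Icc 1 X).filter (fun q => q % 4 = 1 ∧ B q)).card : ℝ) +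
      (((Icc 1 X).filter (fun q => q % 4 = 1 ∧ ¬ B q)).card : ℝ) = ((Icc 1 X).filter (fun q => q % 4 = 1)).card := by
      exact_mod_cast hsplit
    rw [le_div_iff₀ (by positivity)]
    have h5 := mul_lt_mul_of_pos_right hX hXp
    have h6 : (2 * (1 / (X:ℝ)) + 80 * ((X:ℝ)⁻¹ * ∑ i ∈ range X, 1 / ((i:ℝ) + 1))) * X =
      2 + 80 * ∑ i ∈ range X, 1 / ((i:ℝ) + 1) := by
      field_simp
    rw [h6] at h5
    norm_num at h5 hb ⊢
    linarith
end

open scoped Classical in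
theorem erdos_true_density_78 :
    0.78 ≤ atTop.liminf (fun X : ℕ =>
      (((Finset.Icc 1 X).filter
        (fun q => q % 4 = 1 ∧ ErdosConjectureHolds q)).card : ℝ) / ((X : ℝ) / 4)) := by
  have h := er_density ErdosConjectureHolds (by
    intro q hq hB
    obtain ⟨f, ⟨h1, h2, h3⟩, h4⟩ := not_not.mp hB
    exact er_false hq f h1 h2 h3 h4)
  convert h
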